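/- Let J(t) = |t| and let g ∈ L¹(ℝⁿ) be nonnegative with g(x) = g₀(|x|) for a strictly decreasing function g₀ on (0,∞) (so g = g^{*n}). Let u, v : ℝⁿ → [0,∞) be nonnegative measurable functions with |{u > τ}| < ∞ and |{v > τ}| < ∞ for all τ > 0 and with ∫_{ℝⁿ}∫_{ℝⁿ} |u(x) − v(y)| g(x−y) dx dy finite. Then equality ∫∫ |u^{*n}(x) − v^{*n}(y)| g(x−y) dx dy = ∫∫ |u(x) − v(y)| g(x−y) dx dy holds if and only if for every τ ∈ (0, min{ess sup u, ess sup v}) there exists z_τ ∈ ℝⁿ such that {u > τ} = {u^{*n} > τ} − z_τ and {v > τ} = {v^{*n} > τ} − z_τ, up to sets of Lebesgue measure zero. -/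

import Mathlib

open MeasureTheory Real

/-- For a measurable set `A ⊂ ℝⁿ` of finite Lebesgue measure, the radius of the open ball
centered at the origin with the same measure as `A`. -/
noncomputable def schwarzRadius (n : ℕ) (A : Set (EuclideanSpace ℝ (Fin n))) : ℝ :=
  ((volume A).toReal / (volume (Metric.ball (0 : EuclideanSpace ℝ (Fin n)) 1)).toReal) ^
    ((n : ℝ)⁻¹)

/-- `A^{*n}`: the open ball in `ℝⁿ` centered at the origin with the same measure as `A`. -/
noncomputable def schwarzSet (n : ℕ) (A : Set (EuclideanSpace ℝ (Fin n))) :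
    Set (EuclideanSpace ℝ (Fin n)) :=
  Metric.ball 0 (schwarzRadius n A)

/-- The Schwarz rearrangement `u^{*n}(x) := ∫₀^∞ χ_{{|u|>t}^{*n}}(x) dt`. -/
noncomputable def schwarzRearr (n : ℕ) (u : EuclideanSpace ℝ (Fin n) → ℝ) :
    EuclideanSpace ℝ (Fin n) → ℝ := fun x =>
  ∫ t in Set.Ioi (0 : ℝ), (schwarzSet n {y | t < |u y|}).indicator (fun _ => (1 : ℝ)) x

/-!
By the layer cake formula, `∬ |u x - v y| g (x - y)` is the integral over `τ` of the `g`-weighted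
measure of the pairs for which exactly one of `u x > τ` and `v y > τ` holds. For sets of finite
volume this mismatch is a constant minus twice the Riesz functional, so the theorem reduces to the
Riesz inequality for two sets and its equality case, level by level.

A polarization of both sets with respect to the same half-space does not decrease the Riesz
functional. If a definite part of a set lies outside the centred ball of the same volume, some
polarization moves a definite volume into the ball; iterating this gives the Riesz inequality. For a
strictly decreasing kernel, a maximizing pair `(U, V)` satisfies a dichotomy for every half-space:
`V` is polarized with respect to it, or `U` is polarized with respect to the complement. Moving the
half-space in a fixed direction yields a hyperplane in which both sets are symmetric. The
hyperplanes for `n` orthogonal directions meet in a point `z` that is a common centre of symmetry of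
the two sets, and then the dichotomy makes both sets polarized towards `z`, hence balls around `z`.

Equality of the integrals gives equality in the Riesz inequality only for almost every level `τ`;
it extends to all levels because the Riesz functional of `{u > τ}` and `{v > τ}` is continuous from
the right in `τ`.
-/

namespace SchwarzRearrangement

open Set Filter Topology ENNReal NNReal Metric symmDiff

variable {E : Type*} [NormedAddCommGroup E] [InnerProductSpace ℝ E]

/-! ### Reflections in hyperplanes -/

section Mirror

/-- The reflection in the affine hyperplane `{x | ⟪x, e⟫ = s}`; this is its meaning only for a unit
vector `e`. -/
def mirror (e : E) (s : ℝ) (x : E) : E := x + (2 * (s - inner ℝ x e)) • e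

variable {e : E} {s : ℝ} {x y : E}

lemma mirror_eq_self (h : inner ℝ x e = s) : mirror e s x = x := by simp [mirror, h]

lemma mirror_neg_neg (e : E) (s : ℝ) : mirror (-e) (-s) = mirror e s := by
  funext x
  simp only [mirror, inner_neg_right]
  module

lemma mirror_sub (e : E) (s : ℝ) (x z : E) :
    mirror e s (x - z) = mirror e (s + inner ℝ z e) x - z := by
  simp only [mirror, inner_sub_left]
  module

lemma continuous_mirror : Continuous fun q : E × ℝ × E ↦ mirror q.1 q.2.1 q.2.2 := by
  unfold mirror; fun_prop

lemma inner_mirror (he : ‖e‖ = 1) (s : ℝ) (x : E) :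
    inner ℝ (mirror e s x) e = 2 * s - inner ℝ x e := by
  rw [mirror, inner_add_left, real_inner_smul_left, real_inner_self_eq_norm_sq, he]
  ring

lemma mirror_involutive (he : ‖e‖ = 1) (s : ℝ) : Function.Involutive (mirror e s) := fun x ↦ by
  rw [mirror, inner_mirror he, mirror]
  module

lemma norm_sub_mirror_sq (he : ‖e‖ = 1) (s : ℝ) (x y : E) :
    ‖x - mirror e s y‖ ^ 2 = ‖x - y‖ ^ 2 + 4 * (s - inner ℝ x e) * (s - inner ℝ y e) := by
  rw [mirror, ← sub_sub, norm_sub_sq_real (x - y), norm_smul, he, real_inner_smul_right,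
    inner_sub_left, mul_one, norm_eq_abs, sq_abs]
  ring

lemma isometry_mirror (he : ‖e‖ = 1) (s : ℝ) : Isometry (mirror e s) := by
  refine Isometry.of_dist_eq fun x y ↦ ?_
  rw [dist_eq_norm, dist_eq_norm, ← sq_eq_sq₀ (norm_nonneg _) (norm_nonneg _),
    norm_sub_mirror_sq he, inner_mirror he, norm_sub_rev, norm_sub_mirror_sq he, norm_sub_rev]
  ring

lemma nndist_mirror_left (he : ‖e‖ = 1) (s : ℝ) (x y : E) :
    nndist (mirror e s x) y = nndist x (mirror e s y) := by
  rw [← (isometry_mirror he s).nndist_eq, mirror_involutive he s]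

lemma nndist_le_nndist_mirror (he : ‖e‖ = 1) (hx : inner ℝ x e ≤ s) (hy : inner ℝ y e ≤ s) :
    nndist x y ≤ nndist x (mirror e s y) := by
  rw [← NNReal.coe_le_coe, coe_nndist, coe_nndist, dist_eq_norm, dist_eq_norm,
    ← sq_le_sq₀ (norm_nonneg _) (norm_nonneg _), norm_sub_mirror_sq he]
  nlinarith [mul_nonneg (sub_nonneg.2 hx) (sub_nonneg.2 hy)]

lemma nndist_lt_nndist_mirror (he : ‖e‖ = 1) (hx : inner ℝ x e < s) (hy : inner ℝ y e < s) :
    nndist x y < nndist x (mirror e s y) := by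
  rw [← NNReal.coe_lt_coe, coe_nndist, coe_nndist, dist_eq_norm, dist_eq_norm,
    ← sq_lt_sq₀ (norm_nonneg _) (norm_nonneg _), norm_sub_mirror_sq he]
  nlinarith [mul_pos (sub_pos.2 hx) (sub_pos.2 hy)]

lemma norm_le_norm_mirror (he : ‖e‖ = 1) (hs : 0 ≤ s) (hx : inner ℝ x e ≤ s) :
    ‖x‖ ≤ ‖mirror e s x‖ := by
  simpa [nndist_zero_left, ← NNReal.coe_le_coe] using
    nndist_le_nndist_mirror (x := 0) he (by simpa using hs) hx

lemma inner_lt_of_norm_lt_norm_mirror (he : ‖e‖ = 1) (hs : 0 < s) (h : ‖x‖ < ‖mirror e s x‖) :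
    inner ℝ x e < s := by
  have := norm_sub_mirror_sq he s 0 x
  simp only [zero_sub, norm_neg, inner_zero_left, sub_zero] at this
  nlinarith [norm_nonneg x]

variable [MeasurableSpace E] [BorelSpace E]

lemma measurable_mirror (e : E) (s : ℝ) : Measurable (mirror e s) :=
  Continuous.measurable <| continuous_mirror.comp
    (continuous_const.prodMk (continuous_const.prodMk continuous_id))

variable [FiniteDimensional ℝ E]

lemma measurePreserving_isometryEquiv (f : E ≃ᵢ E) :
    MeasurePreserving f (volume : Measure E) volume := by
  simpa only [InnerProductSpace.euclideanHausdorffMeasure_eq_volume] using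
    f.measurePreserving_euclideanHausdorffMeasure (Module.finrank ℝ E)

lemma measurePreserving_mirror (he : ‖e‖ = 1) (s : ℝ) :
    MeasurePreserving (mirror e s) (volume : Measure E) volume :=
  measurePreserving_isometryEquiv ⟨(mirror_involutive he s).toPerm, isometry_mirror he s⟩

end Mirror

/-! ### Polarization -/

section Polarization

/-- The polarization (two-point rearrangement) of `U` with respect to the half-space
`{x | ⟪x, e⟫ ≤ s}`: a point of `U` outside the half-space is moved to its mirror image whenever the
latter is not in `U`. -/
def polarization (e : E) (s : ℝ) (U : Set E) : Set E :=
  (U ∩ mirror e s ⁻¹' U) ∪ {x | inner ℝ x e ≤ s} ∩ (U ∪ mirror e s ⁻¹' U)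

variable {e : E} {s : ℝ} {x : E} {U : Set E}

lemma mem_polarization_of_inner_le (h : inner ℝ x e ≤ s) :
    x ∈ polarization e s U ↔ x ∈ U ∨ mirror e s x ∈ U := by
  simp only [polarization, mem_union, mem_inter_iff, mem_preimage, mem_ofPred_eq, h, true_and]
  tauto

lemma mirror_mem_polarization_of_inner_le (he : ‖e‖ = 1) (h : inner ℝ x e ≤ s) :
    mirror e s x ∈ polarization e s U ↔ x ∈ U ∧ mirror e s x ∈ U := by
  rcases h.lt_or_eq with h | h
  · have h' : ¬ inner ℝ (mirror e s x) e ≤ s := by rw [inner_mirror he]; linarith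
    simp only [polarization, mem_union, mem_inter_iff, mem_preimage, mem_ofPred_eq, h', false_and,
      or_false, mirror_involutive he s x, and_comm]
  · simp only [mirror_eq_self h, mem_polarization_of_inner_le h.le, or_self, and_self]

lemma exists_norm_le_of_mem_polarization (he : ‖e‖ = 1) (hs : 0 ≤ s)
    (hx : x ∈ polarization e s U) : ∃ y ∈ U, ‖x‖ ≤ ‖y‖ := by
  rcases hx with ⟨hx, -⟩ | ⟨hxs, hx | hx⟩
  · exact ⟨x, hx, le_rfl⟩
  · exact ⟨x, hx, le_rfl⟩
  · exact ⟨mirror e s x, hx, norm_le_norm_mirror he hs hxs⟩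

lemma polarization_subset_closedBall {ρ : ℝ} (he : ‖e‖ = 1) (hs : 0 < s)
    (hU : U ⊆ closedBall 0 ρ) : polarization e s U ⊆ closedBall 0 ρ := fun x hx ↦ by
  obtain ⟨y, hy, hxy⟩ := exists_norm_le_of_mem_polarization he hs.le hx
  exact mem_closedBall_zero_iff.2 (hxy.trans (mem_closedBall_zero_iff.1 (hU hy)))

lemma mirror_preimage_sdiff_polarization (he : ‖e‖ = 1) (s : ℝ) (U : Set E) :
    mirror e s ⁻¹' (U \ polarization e s U) = polarization e s U \ U := by
  ext x
  rcases le_total (inner ℝ x e) s with h | h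
  · simp only [mem_preimage, Set.mem_sdiff, mirror_mem_polarization_of_inner_le he h,
      mem_polarization_of_inner_le h]
    tauto
  · have h' : inner ℝ (mirror e s x) e ≤ s := by rw [inner_mirror he]; linarith
    have hx := mirror_mem_polarization_of_inner_le (U := U) he h'
    rw [mirror_involutive he s x] at hx
    simp only [mem_preimage, Set.mem_sdiff, hx, mem_polarization_of_inner_le h',
      mirror_involutive he s x]
    tauto

lemma polarization_inter_ball_union_holes_subset (he : ‖e‖ = 1) (hs : 0 ≤ s) (r : ℝ) :
    polarization e s (U ∩ ball 0 r ∪ (ball 0 r \ U) ∩ mirror e s ⁻¹' (U \ ball 0 r)) ⊆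
      polarization e s U ∩ ball 0 r := by
  refine fun x hx ↦ ⟨?_, ?_⟩
  · have hxx := mirror_involutive he s x
    rcases hx with ⟨⟨hxU, hxB⟩ | ⟨-, hσx⟩, ⟨hσU, hσB⟩ | ⟨⟨-, hσU⟩, hσσ⟩⟩ |
      ⟨hxs, (⟨hxU, -⟩ | ⟨-, hσx⟩) | (⟨hσU, -⟩ | ⟨-, hσσ⟩)⟩
    · exact .inl ⟨hxU, hσU⟩
    · exact absurd hxB (hxx ▸ hσσ.2)
    · exact absurd hσB hσx.2
    · exact absurd hσx.1 hσU
    · exact .inr ⟨hxs, .inl hxU⟩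
    · exact .inr ⟨hxs, .inr hσx.1⟩
    · exact .inr ⟨hxs, .inr hσU⟩
    · exact .inr ⟨hxs, .inl (hxx ▸ hσσ.1)⟩
  · obtain ⟨y, hy, hxy⟩ := exists_norm_le_of_mem_polarization he hs hx
    have hyB : y ∈ ball 0 r := hy.elim (·.2) (·.1.1)
    rw [mem_ball_zero_iff] at hyB ⊢
    exact hxy.trans_lt hyB

variable [MeasurableSpace E] [BorelSpace E]

lemma measurableSet_polarization (e : E) (s : ℝ) (hU : MeasurableSet U) :
    MeasurableSet (polarization e s U) := by
  have hU' := measurable_mirror e s hU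
  exact (hU.inter hU').union
    ((measurableSet_le (by fun_prop) measurable_const).inter (hU.union hU'))

variable [FiniteDimensional ℝ E]

lemma volume_polarization (he : ‖e‖ = 1) (s : ℝ) (hU : MeasurableSet U) :
    volume (polarization e s U) = volume U := by
  have hP := measurableSet_polarization e s hU
  rw [← measure_inter_add_sdiff (polarization e s U) hU, ← measure_inter_add_sdiff U hP,
    ← mirror_preimage_sdiff_polarization he s U,
    (measurePreserving_mirror he s).measure_preimage (hU.diff hP).nullMeasurableSet, inter_comm]

lemma volume_polarization_sdiff_ball_add_le (he : ‖e‖ = 1) (hs : 0 < s) (hU : MeasurableSet U)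
    (hfin : volume U ≠ ⊤) (r : ℝ) :
    volume (polarization e s U \ ball 0 r) +
      volume ((ball 0 r \ U) ∩ mirror e s ⁻¹' (U \ ball 0 r)) ≤ volume (U \ ball 0 r) := by
  set B : Set E := ball 0 r
  set holes := (B \ U) ∩ mirror e s ⁻¹' (U \ B)
  have hBm : MeasurableSet B := measurableSet_ball
  have hm : MeasurableSet holes := (hBm.diff hU).inter (measurable_mirror e s (hU.diff hBm))
  have hle : volume (U ∩ B) + volume holes ≤ volume (polarization e s U ∩ B) := by
    rw [← measure_union (disjoint_left.2 fun x hx hx' ↦ hx'.1.2 hx.1) hm,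
      ← volume_polarization he s ((hU.inter hBm).union hm)]
    exact measure_mono (polarization_inter_ball_union_holes_subset he hs.le r)
  refine (ENNReal.add_le_add_iff_left
    (ne_top_of_le_ne_top hfin (measure_mono (inter_subset_left (t := B))))).1 ?_
  calc volume (U ∩ B) + (volume (polarization e s U \ B) + volume holes)
      = volume (U ∩ B) + volume holes + volume (polarization e s U \ B) := by ring
    _ ≤ volume (polarization e s U ∩ B) + volume (polarization e s U \ B) := by gcongr
    _ = volume (U ∩ B) + volume (U \ B) := by
      rw [measure_inter_add_sdiff _ hBm, measure_inter_add_sdiff _ hBm, volume_polarization he s hU]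

end Polarization

/-! ### The Riesz functional -/

section RieszFunctional

variable [MeasurableSpace E] [BorelSpace E] [FiniteDimensional ℝ E]

/-- The Riesz functional `∬ 1_U(x) φ(|x - y|) 1_V(y) dx dy` of two sets, for the radial kernel with
profile `φ`. -/
noncomputable def rieszFunctional (φ : ℝ≥0 → ℝ≥0∞) (U V : Set E) : ℝ≥0∞ :=
  ∫⁻ p in U ×ˢ V, φ (nndist p.1 p.2)

end RieszFunctional

section MirrorSum

/-- The sum of `F` over the four points obtained from `p` by reflecting either component. -/
noncomputable def mirrorSum (e : E) (s : ℝ) (F : E × E → ℝ≥0∞) (p : E × E) : ℝ≥0∞ :=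
  F p + F (mirror e s p.1, mirror e s p.2) + (F (p.1, mirror e s p.2) + F (mirror e s p.1, p.2))

variable {e : E} {s : ℝ} {F : E × E → ℝ≥0∞}

lemma mirrorSum_mirror_fst (he : ‖e‖ = 1) (x y : E) :
    mirrorSum e s F (mirror e s x, y) = mirrorSum e s F (x, y) := by
  simp only [mirrorSum, mirror_involutive he s x]; ring

lemma mirrorSum_mirror_snd (he : ‖e‖ = 1) (x y : E) :
    mirrorSum e s F (x, mirror e s y) = mirrorSum e s F (x, y) := by
  simp only [mirrorSum, mirror_involutive he s y]; ring

lemma mirrorSum_le_mirrorSum {G : E × E → ℝ≥0∞} (he : ‖e‖ = 1)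
    (h : ∀ x y, inner ℝ x e ≤ s → inner ℝ y e ≤ s →
      mirrorSum e s F (x, y) ≤ mirrorSum e s G (x, y)) (p : E × E) :
    mirrorSum e s F p ≤ mirrorSum e s G p := by
  have hmirror : ∀ {x : E}, s ≤ inner ℝ x e → inner ℝ (mirror e s x) e ≤ s := fun hx ↦ by
    rw [inner_mirror he]; linarith
  obtain ⟨x, y⟩ := p
  rcases le_total (inner ℝ x e) s with hx | hx <;> rcases le_total (inner ℝ y e) s with hy | hy
  · exact h x y hx hy
  · simpa only [mirrorSum_mirror_snd he] using h x (mirror e s y) hx (hmirror hy)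
  · simpa only [mirrorSum_mirror_fst he] using h (mirror e s x) y (hmirror hx) hy
  · simpa only [mirrorSum_mirror_fst he, mirrorSum_mirror_snd he] using
      h (mirror e s x) (mirror e s y) (hmirror hx) (hmirror hy)

variable [MeasurableSpace E] [BorelSpace E]

lemma measurable_mirrorSum (e : E) (s : ℝ) (hF : Measurable F) : Measurable (mirrorSum e s F) := by
  have := measurable_mirror e s
  unfold mirrorSum
  fun_prop

variable [FiniteDimensional ℝ E]

lemma lintegral_mirrorSum (he : ‖e‖ = 1) (s : ℝ) (hF : Measurable F) :
    ∫⁻ p, mirrorSum e s F p = 4 * ∫⁻ p, F p := by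
  have hσ := measurePreserving_mirror he s
  have hid := MeasurePreserving.id (volume : Measure E)
  have h₁ := (hσ.prod hσ).lintegral_comp hF
  have h₂ := (hid.prod hσ).lintegral_comp hF
  have h₃ := (hσ.prod hid).lintegral_comp hF
  simp only [Prod.map_def, id, ← Measure.volume_eq_prod] at h₁ h₂ h₃
  have hm := measurable_mirror e s
  unfold mirrorSum
  rw [lintegral_add_left (by fun_prop), lintegral_add_left hF, lintegral_add_left (by fun_prop),
    h₁, h₂, h₃]
  ring

end MirrorSum

section PolarizationInequality

variable {φ : ℝ≥0 → ℝ≥0∞} {e : E} {s : ℝ} {U V : Set E} {x y : E}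

lemma mirrorSum_indicator_kernel (he : ‖e‖ = 1) (φ : ℝ≥0 → ℝ≥0∞) (U V : Set E) (x y : E) :
    mirrorSum e s ((U ×ˢ V).indicator fun p ↦ φ (nndist p.1 p.2)) (x, y) =
      ((U ×ˢ V).indicator (fun _ ↦ φ (nndist x y)) (x, y) +
        (U ×ˢ V).indicator (fun _ ↦ φ (nndist x y)) (mirror e s x, mirror e s y)) +
      ((U ×ˢ V).indicator (fun _ ↦ φ (nndist x (mirror e s y))) (x, mirror e s y) +
        (U ×ˢ V).indicator (fun _ ↦ φ (nndist x (mirror e s y))) (mirror e s x, y)) := by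
  simp only [mirrorSum, indicator, (isometry_mirror he s).nndist_eq, nndist_mirror_left he]

lemma mirrorSum_indicator_le_polarization (hφ : Antitone φ) (he : ‖e‖ = 1) (U V : Set E)
    (p : E × E) :
    mirrorSum e s ((U ×ˢ V).indicator fun p ↦ φ (nndist p.1 p.2)) p ≤
      mirrorSum e s ((polarization e s U ×ˢ polarization e s V).indicator
        fun p ↦ φ (nndist p.1 p.2)) p := by
  refine mirrorSum_le_mirrorSum he (fun x y hx hy ↦ ?_) p
  have hle := hφ (nndist_le_nndist_mirror he hx hy)
  rw [mirrorSum_indicator_kernel he, mirrorSum_indicator_kernel he]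
  have hxU := mem_polarization_of_inner_le (U := U) hx
  have hσxU := mirror_mem_polarization_of_inner_le (U := U) he hx
  have hyV := mem_polarization_of_inner_le (U := V) hy
  have hσyV := mirror_mem_polarization_of_inner_le (U := V) he hy
  by_cases x ∈ U <;> by_cases mirror e s x ∈ U <;> by_cases y ∈ V <;> by_cases mirror e s y ∈ V <;>
    simp [indicator, *, add_comm]

lemma mirrorSum_indicator_lt_polarization (hφ : StrictAnti φ) (he : ‖e‖ = 1)
    (hx : inner ℝ x e ≤ s) (hxU : x ∈ U) (hσxU : mirror e s x ∉ U)
    (hy : inner ℝ y e ≤ s) (hyV : y ∉ V) (hσyV : mirror e s y ∈ V) :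
    mirrorSum e s ((U ×ˢ V).indicator fun p ↦ φ (nndist p.1 p.2)) (x, y) <
      mirrorSum e s ((polarization e s U ×ˢ polarization e s V).indicator
        fun p ↦ φ (nndist p.1 p.2)) (x, y) := by
  have hx' : inner ℝ x e < s := hx.lt_of_ne fun h ↦ hσxU (by rwa [mirror_eq_self h])
  have hy' : inner ℝ y e < s := hy.lt_of_ne fun h ↦ hyV (by rwa [mirror_eq_self h] at hσyV)
  rw [mirrorSum_indicator_kernel he, mirrorSum_indicator_kernel he]
  simpa [indicator, mem_polarization_of_inner_le hx, mem_polarization_of_inner_le hy,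
    mirror_mem_polarization_of_inner_le he hx, mirror_mem_polarization_of_inner_le he hy, hxU, hyV,
    hσxU, hσyV] using hφ (nndist_lt_nndist_mirror he hx' hy')

variable [MeasurableSpace E] [BorelSpace E] [FiniteDimensional ℝ E]

lemma measurable_kernel (hφ : Antitone φ) : Measurable fun p : E × E ↦ φ (nndist p.1 p.2) :=
  hφ.measurable.comp measurable_nndist

lemma lintegral_mirrorSum_indicator_kernel (hφ : Antitone φ) (he : ‖e‖ = 1) (s : ℝ)
    (hU : MeasurableSet U) (hV : MeasurableSet V) :
    ∫⁻ p, mirrorSum e s ((U ×ˢ V).indicator fun p ↦ φ (nndist p.1 p.2)) p =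
      4 * rieszFunctional φ U V := by
  rw [lintegral_mirrorSum he s ((measurable_kernel hφ).indicator (hU.prod hV)), rieszFunctional,
    lintegral_indicator (hU.prod hV)]

theorem rieszFunctional_le_polarization (hφ : Antitone φ) (he : ‖e‖ = 1) (s : ℝ)
    (hU : MeasurableSet U) (hV : MeasurableSet V) :
    rieszFunctional φ U V ≤ rieszFunctional φ (polarization e s U) (polarization e s V) := by
  refine (ENNReal.mul_le_mul_iff_right (a := 4) (by simp) (by simp)).1 ?_
  rw [← lintegral_mirrorSum_indicator_kernel hφ he s hU hV,
    ← lintegral_mirrorSum_indicator_kernel hφ he s (measurableSet_polarization e s hU)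
      (measurableSet_polarization e s hV)]
  exact lintegral_mono (mirrorSum_indicator_le_polarization hφ he U V)

/-- `U` is, up to a null set, invariant under polarization with respect to `{x | ⟪x, e⟫ ≤ s}`. -/
def IsPolarized (e : E) (s : ℝ) (U : Set E) : Prop :=
  ∀ᵐ x, inner ℝ x e ≤ s → mirror e s x ∈ U → x ∈ U

lemma isPolarized_neg_neg_iff (he : ‖e‖ = 1) :
    IsPolarized (-e) (-s) U ↔ ∀ᵐ x, inner ℝ x e ≤ s → x ∈ U → mirror e s x ∈ U := by
  have hσ := measurePreserving_mirror he s
  have key : ∀ {p : E → Prop}, (∀ᵐ x, p x) → ∀ᵐ x, p (mirror e s x) :=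
    fun h ↦ hσ.quasiMeasurePreserving.ae h
  simp only [IsPolarized, mirror_neg_neg, inner_neg_right, neg_le_neg_iff]
  constructor <;> intro h <;> filter_upwards [key h] with x hx hxs hxU
  · rw [mirror_involutive he s x] at hx
    exact hx (by rw [inner_mirror he]; linarith) hxU
  · rw [mirror_involutive he s x] at hx
    exact hx (by rw [inner_mirror he]; linarith) hxU

theorem isPolarized_of_rieszFunctional_polarization_le (hφ : StrictAnti φ) (he : ‖e‖ = 1)
    (hU : MeasurableSet U) (hV : MeasurableSet V) (hfin : rieszFunctional φ U V ≠ ⊤)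
    (h : rieszFunctional φ (polarization e s U) (polarization e s V) ≤ rieszFunctional φ U V) :
    IsPolarized (-e) (-s) U ∨ IsPolarized e s V := by
  have hPU := measurableSet_polarization e s hU
  have hPV := measurableSet_polarization e s hV
  have hUV := lintegral_mirrorSum_indicator_kernel hφ.antitone he s hU hV
  have hae := ae_eq_of_ae_le_of_lintegral_le
    (ae_of_all _ (mirrorSum_indicator_le_polarization hφ.antitone he U V))
    (by rw [hUV]; exact ENNReal.mul_ne_top (by simp) hfin)
    (measurable_mirrorSum e s
      ((measurable_kernel hφ.antitone).indicator (hPU.prod hPV))).aemeasurable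
    (by rw [hUV, lintegral_mirrorSum_indicator_kernel hφ.antitone he s hPU hPV]; gcongr)
  rw [isPolarized_neg_neg_iff he, IsPolarized, ae_iff, ae_iff, ← mul_eq_zero, ← Measure.prod_prod]
  refine measure_mono_null ?_ hae
  rintro ⟨x, y⟩ ⟨hx, hy⟩
  simp only [mem_ofPred_eq, Classical.not_imp] at hx hy
  exact (mirrorSum_indicator_lt_polarization hφ he hx.1 hx.2.1 hx.2.2 hy.1 hy.2.2 hy.2.1).ne

end PolarizationInequality

/-! ### Averaging over the reflections that exchange the origin with another point -/

section Averaging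

/-- The reflection exchanging `0` and `w`. -/
noncomputable def mirrorTo (w x : E) : E := mirror (‖w‖⁻¹ • w) (‖w‖ / 2) x

variable {w x y : E} {δ ρ : ℝ}

lemma mirrorTo_eq_sub_inversion (hw : w ≠ 0) (x : E) :
    mirrorTo w x = x + w - (2 * inner ℝ x w) • EuclideanGeometry.inversion 0 1 w := by
  have : ‖w‖ ≠ 0 := norm_ne_zero_iff.2 hw
  rw [mirrorTo, mirror, EuclideanGeometry.inversion, dist_zero_right, real_inner_smul_right,
    vsub_eq_sub, vadd_eq_add, add_zero, sub_zero]
  match_scalars <;> field_simp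

lemma lipschitzOnWith_mirrorTo (hδ : 0 < δ) (hx : ‖x‖ ≤ ρ) :
    LipschitzOnWith (1 + 4 * ρ / δ).toNNReal (mirrorTo · x) {w | δ ≤ ‖w‖} := by
  refine LipschitzOnWith.of_dist_le_mul fun w (hw : δ ≤ ‖w‖) w' (hw' : δ ≤ ‖w'‖) ↦ ?_
  have hρ : 0 ≤ ρ := (norm_nonneg x).trans hx
  have pw : 0 < ‖w‖ := hδ.trans_le hw
  have pw' : 0 < ‖w'‖ := hδ.trans_le hw'
  have hw₀ : w ≠ 0 := norm_pos_iff.1 pw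
  have hw₀' : w' ≠ 0 := norm_pos_iff.1 pw'
  have hinv := EuclideanGeometry.dist_inversion_center (0 : E) w 1
  have hinv' := EuclideanGeometry.dist_inversion_inversion hw₀ hw₀' 1
  simp only [dist_eq_norm, sub_zero, one_pow] at hinv hinv'
  rw [Real.coe_toNNReal _ (by positivity), dist_eq_norm, dist_eq_norm,
    mirrorTo_eq_sub_inversion hw₀, mirrorTo_eq_sub_inversion hw₀']
  set v := EuclideanGeometry.inversion 0 1 w
  set v' := EuclideanGeometry.inversion 0 1 w'
  have hsplit : x + w - (2 * inner ℝ x w) • v - (x + w' - (2 * inner ℝ x w') • v') =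
      (w - w') - (2 : ℝ) • (inner ℝ x (w - w') • v + inner ℝ x w' • (v - v')) := by
    rw [inner_sub_right]
    module
  have hv : ‖inner ℝ x (w - w') • v‖ ≤ ρ / δ * ‖w - w'‖ := by
    calc ‖inner ℝ x (w - w') • v‖ ≤ (‖x‖ * ‖w - w'‖) * (1 / ‖w‖) := by
          rw [norm_smul, hinv]
          gcongr
          exact norm_inner_le_norm x _
      _ ≤ (ρ * ‖w - w'‖) * (1 / δ) := by gcongr
      _ = ρ / δ * ‖w - w'‖ := by ring
  have hv' : ‖inner ℝ x w' • (v - v')‖ ≤ ρ / δ * ‖w - w'‖ := by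
    calc ‖inner ℝ x w' • (v - v')‖ ≤ (‖x‖ * ‖w'‖) * (1 / (‖w‖ * ‖w'‖) * ‖w - w'‖) := by
          rw [norm_smul, hinv']
          gcongr
          exact norm_inner_le_norm x _
      _ = ‖x‖ / ‖w‖ * ‖w - w'‖ := by field_simp
      _ ≤ ρ / δ * ‖w - w'‖ := by gcongr
  calc _ ≤ ‖w - w'‖ + 2 * (ρ / δ * ‖w - w'‖ + ρ / δ * ‖w - w'‖) := by
        rw [hsplit]
        refine (norm_sub_le _ _).trans ?_
        rw [norm_smul, Real.norm_two]
        gcongr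
        exact (norm_add_le _ _).trans (add_le_add hv hv')
    _ = (1 + 4 * ρ / δ) * ‖w - w'‖ := by ring

lemma exists_mirrorTo_eq (h : ‖x‖ < ‖y‖) :
    ∃ w, ‖y‖ - ‖x‖ ≤ ‖w‖ ∧ ‖w‖ ≤ ‖y‖ + ‖x‖ ∧ mirrorTo w x = y := by
  have hd : 0 < ‖y - x‖ := norm_pos_iff.2 (sub_ne_zero.2 fun hyx ↦ h.ne (by rw [hyx]))
  have hx₀ := norm_nonneg x
  have hsub : ‖y‖ - ‖x‖ ≤ ‖y - x‖ := norm_sub_norm_le _ _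
  have hadd : ‖y - x‖ ≤ ‖y‖ + ‖x‖ := norm_sub_le _ _
  have hinner : ‖y - x‖ ^ 2 = ‖y‖ ^ 2 - 2 * inner ℝ x y + ‖x‖ ^ 2 := by
    rw [norm_sub_sq_real, real_inner_comm]
  set t : ℝ := (‖y‖ ^ 2 - ‖x‖ ^ 2) / ‖y - x‖ ^ 2 with ht
  have htp : 0 < t := div_pos (by nlinarith) (by positivity)
  have hn : ‖t • (y - x)‖ = t * ‖y - x‖ := by rw [norm_smul, norm_of_nonneg htp.le]
  have htd : t * ‖y - x‖ = (‖y‖ ^ 2 - ‖x‖ ^ 2) / ‖y - x‖ := by rw [ht]; field_simp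
  refine ⟨t • (y - x), ?_, ?_, ?_⟩
  · rw [hn, htd, le_div_iff₀ hd]; nlinarith
  · rw [hn, htd, div_le_iff₀ hd]; nlinarith
  · have hunit : (t * ‖y - x‖)⁻¹ • t • (y - x) = ‖y - x‖⁻¹ • (y - x) := by
      rw [smul_smul]; congr 1; field_simp
    have hcoef : 2 * (t * ‖y - x‖ / 2 - ‖y - x‖⁻¹ * inner ℝ x (y - x)) * ‖y - x‖⁻¹ = 1 := by
      rw [ht, inner_sub_right, real_inner_self_eq_norm_sq]
      field_simp
      linarith
    rw [mirrorTo, mirror, hn, hunit, real_inner_smul_right, smul_smul, hcoef, one_smul,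
      add_sub_cancel]

variable [MeasurableSpace E] [BorelSpace E] [FiniteDimensional ℝ E]

lemma volume_image_le_of_lipschitzOnWith {K : ℝ≥0} {f : E → E} {s : Set E}
    (hf : LipschitzOnWith K f s) :
    volume (f '' s) ≤ (K : ℝ≥0∞) ^ Module.finrank ℝ E * volume s := by
  have h := hf.hausdorffMeasure_image_le (d := (Module.finrank ℝ E : ℝ)) (Nat.cast_nonneg _)
  rw [ENNReal.rpow_natCast] at h
  rw [← InnerProductSpace.euclideanHausdorffMeasure_eq_volume,
    Measure.euclideanHausdorffMeasure_def]
  simp only [Measure.smul_apply, ENNReal.smul_def, smul_eq_mul]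
  rw [mul_left_comm]
  gcongr

lemma measurable_mirrorTo : Measurable fun p : E × E ↦ mirrorTo p.1 p.2 := by
  unfold mirrorTo mirror; fun_prop

lemma volume_mul_volume_le_lintegral_mirrorTo (hδ : 0 < δ) {P Q : Set E} (hP : MeasurableSet P)
    (hQ : MeasurableSet Q) (hPρ : P ⊆ closedBall 0 ρ) (hQρ : Q ⊆ closedBall 0 ρ)
    (hPQ : ∀ x ∈ P, ∀ y ∈ Q, ‖x‖ + δ ≤ ‖y‖) :
    volume P * volume Q ≤ ((1 + 4 * ρ / δ).toNNReal : ℝ≥0∞) ^ Module.finrank ℝ E *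
      ∫⁻ w in {w | δ ≤ ‖w‖ ∧ ‖w‖ ≤ 2 * ρ}, volume (P ∩ mirrorTo w ⁻¹' Q) := by
  set K : ℝ≥0∞ := ((1 + 4 * ρ / δ).toNNReal : ℝ≥0∞) ^ Module.finrank ℝ E
  set W : Set E := {w | δ ≤ ‖w‖ ∧ ‖w‖ ≤ 2 * ρ}
  have hslice (x) (hx : x ∈ P) : volume Q ≤ K * volume ((mirrorTo · x) ⁻¹' Q ∩ W) := by
    have hxρ : ‖x‖ ≤ ρ := mem_closedBall_zero_iff.1 (hPρ hx)
    have hlip := (lipschitzOnWith_mirrorTo hδ hxρ).mono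
      fun w (hw : w ∈ (mirrorTo · x) ⁻¹' Q ∩ W) ↦ hw.2.1
    refine (measure_mono fun y hy ↦ ?_).trans (volume_image_le_of_lipschitzOnWith hlip)
    have hxy := hPQ x hx y hy
    have hyρ : ‖y‖ ≤ ρ := mem_closedBall_zero_iff.1 (hQρ hy)
    obtain ⟨w, hw, hw', rfl⟩ := exists_mirrorTo_eq (show ‖x‖ < ‖y‖ by linarith)
    exact ⟨w, ⟨hy, by linarith, by linarith⟩, rfl⟩
  have hmeas : Measurable (Function.uncurry fun x w ↦ Q.indicator (1 : E → ℝ≥0∞) (mirrorTo w x)) :=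
    (measurable_one.indicator hQ).comp (measurable_mirrorTo.comp measurable_swap)
  calc volume P * volume Q = ∫⁻ _ in P, volume Q := by rw [setLIntegral_const, mul_comm]
    _ ≤ ∫⁻ x in P, K * volume ((mirrorTo · x) ⁻¹' Q ∩ W) := setLIntegral_mono' hP hslice
    _ = K * ∫⁻ x in P, ∫⁻ w in W, Q.indicator 1 (mirrorTo w x) := by
      rw [lintegral_const_mul' _ _ (by finiteness)]
      refine congrArg (K * ·) (lintegral_congr fun x ↦ ?_)
      have hQx : MeasurableSet ((mirrorTo · x) ⁻¹' Q) :=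
        (measurable_mirrorTo.comp measurable_prodMk_right) hQ
      rw [← Measure.restrict_apply hQx, ← lintegral_indicator_one hQx]
      rfl
    _ = K * ∫⁻ w in W, volume (P ∩ mirrorTo w ⁻¹' Q) := by
      rw [lintegral_lintegral_swap hmeas.aemeasurable]
      refine congrArg (K * ·) (lintegral_congr fun w ↦ ?_)
      have hQw : MeasurableSet (mirrorTo w ⁻¹' Q) := measurable_mirror _ _ hQ
      rw [inter_comm, ← Measure.restrict_apply hQw, ← lintegral_indicator_one hQw]
      rfl

lemma exists_volume_mul_volume_le_inter_mirror (hδ : 0 < δ) (ρ : ℝ) : ∃ C : ℝ≥0∞, C ≠ ⊤ ∧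
    ∀ P Q : Set E, MeasurableSet P → MeasurableSet Q → P ⊆ closedBall 0 ρ → Q ⊆ closedBall 0 ρ →
      (∀ x ∈ P, ∀ y ∈ Q, ‖x‖ + δ ≤ ‖y‖) → volume P * volume Q ≠ 0 →
      ∃ (e : E) (s : ℝ), ‖e‖ = 1 ∧ 0 < s ∧
        volume P * volume Q ≤ C * volume (P ∩ mirror e s ⁻¹' Q) := by
  set W : Set E := {w | δ ≤ ‖w‖ ∧ ‖w‖ ≤ 2 * ρ} with hW
  have hWm : MeasurableSet W :=
    (measurableSet_le measurable_const measurable_norm).inter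
      (measurableSet_le measurable_norm measurable_const)
  have hWfin : volume W ≠ ⊤ := measure_ne_top_of_subset
    (fun w hw ↦ mem_closedBall_zero_iff.2 hw.2) (measure_closedBall_lt_top (r := 2 * ρ)).ne
  refine ⟨((1 + 4 * ρ / δ).toNNReal : ℝ≥0∞) ^ Module.finrank ℝ E * volume W, by finiteness,
    fun P Q hP hQ hPρ hQρ hPQ hne ↦ ?_⟩
  have havg := volume_mul_volume_le_lintegral_mirrorTo hδ hP hQ hPρ hQρ hPQ
  rw [← hW, ← measure_mul_setLAverage _ hWfin, ← mul_assoc] at havg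
  have hW₀ : volume W ≠ 0 := fun h ↦ hne (by simpa [h] using havg)
  have hPfin : volume P ≠ ⊤ := measure_ne_top_of_subset hPρ measure_closedBall_lt_top.ne
  have hint : ∫⁻ w in W, volume (P ∩ mirrorTo w ⁻¹' Q) ≠ ⊤ := by
    refine ne_top_of_le_ne_top (b := ∫⁻ _ in W, volume P) ?_
      (lintegral_mono fun w ↦ measure_mono inter_subset_left)
    rw [setLIntegral_const]
    finiteness
  obtain ⟨w, hw, hle⟩ := exists_setLAverage_le hW₀ hWm.nullMeasurableSet hint
  have hw₀ : 0 < ‖w‖ := hδ.trans_le hw.1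
  exact ⟨‖w‖⁻¹ • w, ‖w‖ / 2, norm_smul_inv_norm (𝕜 := ℝ) (norm_pos_iff.1 hw₀), by positivity,
    havg.trans (by gcongr; exact hle)⟩

end Averaging

/-! ### Basic properties of the Riesz functional -/

section RieszFunctionalBasic

variable {φ : ℝ≥0 → ℝ≥0∞} {U V U' V' : Set E}

variable [MeasurableSpace E] [BorelSpace E] [FiniteDimensional ℝ E]

lemma rieszFunctional_congr_ae (hU : U =ᵐ[volume] U') (hV : V =ᵐ[volume] V') :
    rieszFunctional φ U V = rieszFunctional φ U' V' :=
  setLIntegral_congr (Measure.set_prod_ae_eq hU hV)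

lemma rieszFunctional_comm (φ : ℝ≥0 → ℝ≥0∞) (U V : Set E) :
    rieszFunctional φ U V = rieszFunctional φ V U := by
  rw [rieszFunctional, rieszFunctional, Measure.volume_eq_prod,
    ← Measure.measurePreserving_swap.setLIntegral_comp_preimage_emb
      MeasurableEquiv.prodComm.measurableEmbedding, preimage_swap_prod]
  simp only [Prod.fst_swap, Prod.snd_swap, nndist_comm]

lemma rieszFunctional_preimage_isometryEquiv (φ : ℝ≥0 → ℝ≥0∞) (f : E ≃ᵢ E) (U V : Set E) :
    rieszFunctional φ (f ⁻¹' U) (f ⁻¹' V) = rieszFunctional φ U V := by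
  have hf := measurePreserving_isometryEquiv f
  have hfe := f.toHomeomorph.measurableEmbedding
  have h := (hf.prod hf).setLIntegral_comp_preimage_emb (hfe.prodMap hfe)
    (fun p ↦ φ (nndist p.1 p.2)) (U ×ˢ V)
  simpa only [rieszFunctional, Measure.volume_eq_prod, ← preimage_prod_map_prod, Prod.map_fst,
    Prod.map_snd, f.isometry.nndist_eq] using h

lemma rieszFunctional_univ_right (hφ : Antitone φ) (U : Set E) :
    rieszFunctional φ U univ = volume U * ∫⁻ x : E, φ ‖x‖₊ := by
  rw [rieszFunctional, Measure.volume_eq_prod, ← Measure.prod_restrict, Measure.restrict_univ,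
    lintegral_prod _ (measurable_kernel hφ).aemeasurable]
  simp only [nndist_eq_nnnorm, lintegral_sub_left_eq_self (fun z : E ↦ φ ‖z‖₊),
    lintegral_const, mul_comm, Measure.restrict_apply_univ]

lemma rieszFunctional_univ_left (hφ : Antitone φ) (V : Set E) :
    rieszFunctional φ univ V = volume V * ∫⁻ x : E, φ ‖x‖₊ := by
  rw [rieszFunctional_comm, rieszFunctional_univ_right hφ]

lemma rieszFunctional_le_add_sdiff (hφ : Antitone φ) (U V B C : Set E) :
    rieszFunctional φ U V ≤ rieszFunctional φ B C +
      (volume (U \ B) + volume (V \ C)) * ∫⁻ x : E, φ ‖x‖₊ := by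
  have hsub : U ×ˢ V ⊆ B ×ˢ C ∪ ((U \ B) ×ˢ univ ∪ univ ×ˢ (V \ C)) := by
    rintro ⟨x, y⟩ ⟨hx, hy⟩
    by_cases hB : x ∈ B <;> by_cases hC : y ∈ C
    · exact .inl ⟨hB, hC⟩
    · exact .inr (.inr ⟨mem_univ _, hy, hC⟩)
    all_goals exact .inr (.inl ⟨⟨hx, hB⟩, mem_univ _⟩)
  rw [add_mul, ← rieszFunctional_univ_right hφ, ← rieszFunctional_univ_left hφ]
  refine (lintegral_mono_set hsub).trans ((lintegral_union_le _ _ _).trans ?_)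
  exact add_le_add le_rfl (lintegral_union_le _ _ _)

end RieszFunctionalBasic

/-! ### The Riesz rearrangement inequality for sets -/

section RieszInequality

variable {φ : ℝ≥0 → ℝ≥0∞} {U V : Set E} {ρ r r' : ℝ} {η : ℝ≥0∞}

variable [MeasurableSpace E] [BorelSpace E] [FiniteDimensional ℝ E]

lemma exists_volume_ball_sdiff_ball_le (r : ℝ) (hη : η ≠ 0) :
    ∃ ε : ℝ, 0 < ε ∧ volume (ball (0 : E) r \ ball 0 (r - ε)) ≤ η := by
  have hempty : ⋂ k : ℕ, ball (0 : E) r \ ball 0 (r - 1 / ((k : ℝ) + 1)) = ∅ := by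
    refine eq_empty_of_forall_notMem fun x hx ↦ ?_
    have hxr : ‖x‖ < r := mem_ball_zero_iff.1 (mem_iInter.1 hx 0).1
    obtain ⟨k, hk⟩ := exists_nat_one_div_lt (sub_pos.2 hxr)
    exact (mem_iInter.1 hx k).2 (mem_ball_zero_iff.2 (by linarith))
  have h := tendsto_measure_iInter_atTop (μ := (volume : Measure E))
    (s := fun k : ℕ ↦ ball (0 : E) r \ ball 0 (r - 1 / ((k : ℝ) + 1)))
    (fun k ↦ (measurableSet_ball.diff measurableSet_ball).nullMeasurableSet)
    (fun a b hab ↦ sdiff_subset_sdiff_right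
      (ball_subset_ball (sub_le_sub_left (Nat.one_div_le_one_div hab) r)))
    ⟨0, measure_ne_top_of_subset sdiff_subset measure_ball_lt_top.ne⟩
  rw [hempty, measure_empty] at h
  obtain ⟨k, hk⟩ := (h.eventually (gt_mem_nhds (pos_iff_ne_zero.2 hη))).exists
  exact ⟨1 / ((k : ℝ) + 1), by positivity, hk.le⟩

lemma exists_le_volume_hole_inter_mirror (ρ r : ℝ) (hη : η ≠ 0) : ∃ c : ℝ≥0∞, c ≠ 0 ∧
    ∀ U : Set E, MeasurableSet U → η ≤ volume ((U ∩ closedBall 0 ρ) \ ball 0 r) →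
      η ≤ volume (ball 0 r \ U) → ∃ (e : E) (s : ℝ), ‖e‖ = 1 ∧ 0 < s ∧
        c ≤ volume ((ball 0 r \ U) ∩ mirror e s ⁻¹' (U \ ball 0 r)) := by
  have hη₂ : η / 2 ≠ 0 := ENNReal.div_ne_zero.2 ⟨hη, ofNat_ne_top⟩
  obtain ⟨ε, hε, hshell⟩ := exists_volume_ball_sdiff_ball_le (E := E) r hη₂
  obtain ⟨C, hC, hmirror⟩ := exists_volume_mul_volume_le_inter_mirror (E := E) hε (max ρ r)
  refine ⟨η / 2 * η / C, ENNReal.div_ne_zero.2 ⟨mul_ne_zero hη₂ hη, hC⟩,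
    fun U hU hout hhole ↦ ?_⟩
  have hηfin : η ≠ ⊤ := ne_top_of_le_ne_top
    (measure_ne_top_of_subset sdiff_subset measure_ball_lt_top.ne) hhole
  set P : Set E := ball 0 (r - ε) \ U
  set Q : Set E := (U ∩ closedBall 0 ρ) \ ball 0 r
  have hP : η / 2 ≤ volume P := by
    refine (ENNReal.add_le_add_iff_right (a := η / 2) (by finiteness)).1 ?_
    calc η / 2 + η / 2 = η := ENNReal.add_halves η
      _ ≤ volume (P ∪ ball 0 r \ ball 0 (r - ε)) := hhole.trans <| measure_mono fun x hx ↦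
        (em (x ∈ ball 0 (r - ε))).imp (⟨·, hx.2⟩) (⟨hx.1, ·⟩)
      _ ≤ volume P + η / 2 := (measure_union_le _ _).trans (by gcongr)
  have hball : ball (0 : E) (r - ε) ⊆ ball 0 r := ball_subset_ball (by linarith)
  obtain ⟨e, s, he, hs, h⟩ := hmirror P Q (measurableSet_ball.diff hU)
    ((hU.inter measurableSet_closedBall).diff measurableSet_ball)
    ((sdiff_subset.trans hball).trans (ball_subset_closedBall.trans
      (closedBall_subset_closedBall (le_max_right _ _))))
    ((sdiff_subset.trans inter_subset_right).trans
      (closedBall_subset_closedBall (le_max_left _ _)))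
    (fun x hx y hy ↦ by
      have hxr := mem_ball_zero_iff.1 hx.1
      have hyr := not_lt.1 (mt mem_ball_zero_iff.2 hy.2)
      linarith)
    (mul_ne_zero (ne_bot_of_le_ne_bot hη₂ hP) (ne_bot_of_le_ne_bot hη hout))
  refine ⟨e, s, he, hs, ENNReal.div_le_of_le_mul' ?_⟩
  calc η / 2 * η ≤ volume P * volume Q := by gcongr
    _ ≤ C * volume (P ∩ mirror e s ⁻¹' Q) := h
    _ ≤ C * volume ((ball 0 r \ U) ∩ mirror e s ⁻¹' (U \ ball 0 r)) := by
      gcongr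
      · exact sdiff_subset_sdiff_left hball
      · exact sdiff_subset_sdiff_left inter_subset_left

lemma exists_le_volume_hole_inter_mirror_of_subset (ρ r : ℝ) (hη : η ≠ 0) : ∃ c : ℝ≥0∞, c ≠ 0 ∧
    ∀ U : Set E, MeasurableSet U → U ⊆ closedBall 0 ρ → volume U ≤ volume (ball (0 : E) r) →
      η ≤ volume (U \ ball 0 r) → ∃ (e : E) (s : ℝ), ‖e‖ = 1 ∧ 0 < s ∧
        c ≤ volume ((ball 0 r \ U) ∩ mirror e s ⁻¹' (U \ ball 0 r)) := by
  obtain ⟨c, hc, h⟩ := exists_le_volume_hole_inter_mirror (E := E) ρ r hη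
  refine ⟨c, hc, fun U hU hUρ hUr hout ↦ h U hU (by rwa [inter_eq_left.2 hUρ]) (hout.trans ?_)⟩
  have hfin : volume (U ∩ ball 0 r) ≠ ⊤ :=
    measure_ne_top_of_subset inter_subset_right measure_ball_lt_top.ne
  refine (ENNReal.add_le_add_iff_left hfin).1 ?_
  rwa [measure_inter_add_sdiff _ measurableSet_ball, inter_comm, measure_inter_add_sdiff _ hU]

lemma exists_polarization_excess_add_le (ρ r r' : ℝ) (hη : η ≠ 0) : ∃ c : ℝ≥0∞, c ≠ 0 ∧
    ∀ U V : Set E, MeasurableSet U → MeasurableSet V → U ⊆ closedBall 0 ρ → V ⊆ closedBall 0 ρ →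
      volume U ≤ volume (ball (0 : E) r) → volume V ≤ volume (ball (0 : E) r') →
      η < volume (U \ ball 0 r) + volume (V \ ball 0 r') → ∃ (e : E) (s : ℝ), ‖e‖ = 1 ∧ 0 < s ∧
        volume (polarization e s U \ ball 0 r) + volume (polarization e s V \ ball 0 r') + c ≤
          volume (U \ ball 0 r) + volume (V \ ball 0 r') := by
  have hη₂ : η / 2 ≠ 0 := ENNReal.div_ne_zero.2 ⟨hη, ofNat_ne_top⟩
  obtain ⟨c, hc, hdrop⟩ := exists_le_volume_hole_inter_mirror_of_subset (E := E) ρ r hη₂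
  obtain ⟨c', hc', hdrop'⟩ := exists_le_volume_hole_inter_mirror_of_subset (E := E) ρ r' hη₂
  refine ⟨min c c', (lt_min (pos_iff_ne_zero.2 hc) (pos_iff_ne_zero.2 hc')).ne',
    fun U V hU hV hUρ hVρ hUr hVr hexcess ↦ ?_⟩
  have hle (e : E) (s : ℝ) (he : ‖e‖ = 1) (hs : 0 < s) :=
    add_le_add
      (volume_polarization_sdiff_ball_add_le he hs hU (hUr.trans_lt measure_ball_lt_top).ne r)
      (volume_polarization_sdiff_ball_add_le he hs hV (hVr.trans_lt measure_ball_lt_top).ne r')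
  simp only [add_add_add_comm] at hle
  rcases le_or_gt (η / 2) (volume (U \ ball 0 r)) with h | h
  · obtain ⟨e, s, he, hs, hcs⟩ := hdrop U hU hUρ hUr h
    exact ⟨e, s, he, hs, le_trans
      (by gcongr; exact ((min_le_left _ _).trans hcs).trans le_self_add) (hle e s he hs)⟩
  · have h' : η / 2 ≤ volume (V \ ball 0 r') := by
      by_contra! h'
      exact (hexcess.trans (ENNReal.add_lt_add h h')).ne (ENNReal.add_halves η).symm
    obtain ⟨e, s, he, hs, hcs⟩ := hdrop' V hV hVρ hVr h'
    exact ⟨e, s, he, hs, le_trans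
      (by gcongr; exact ((min_le_right _ _).trans hcs).trans le_add_self) (hle e s he hs)⟩

/-- Every polarization that is chosen decreases the excess by at least `c`, so finitely many of them
bring it below `η`. -/
lemma rieszFunctional_le_ball_add_mul (hφ : Antitone φ) (hη : η ≠ 0) (hU : MeasurableSet U)
    (hV : MeasurableSet V) (hUρ : U ⊆ closedBall 0 ρ) (hVρ : V ⊆ closedBall 0 ρ)
    (hUr : volume U ≤ volume (ball (0 : E) r)) (hVr : volume V ≤ volume (ball (0 : E) r')) :
    rieszFunctional φ U V ≤
      rieszFunctional φ (ball (0 : E) r) (ball 0 r') + η * ∫⁻ x : E, φ ‖x‖₊ := by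
  obtain ⟨c, hc, hpol⟩ := exists_polarization_excess_add_le (E := E) ρ r r' hη
  have hfin : volume (U \ ball 0 r) + volume (V \ ball 0 r') ≠ ⊤ := add_ne_top.2
    ⟨measure_ne_top_of_subset sdiff_subset (hUr.trans_lt measure_ball_lt_top).ne,
      measure_ne_top_of_subset sdiff_subset (hVr.trans_lt measure_ball_lt_top).ne⟩
  obtain ⟨k, hk⟩ := ENNReal.exists_nat_mul_gt hc hfin
  replace hk := hk.le.trans (le_self_add (b := η))
  induction k generalizing U V with
  | zero =>
    refine (rieszFunctional_le_add_sdiff hφ U V (ball 0 r) (ball 0 r')).trans ?_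
    gcongr
    simpa using hk
  | succ k ih =>
    rcases le_or_gt (volume (U \ ball 0 r) + volume (V \ ball 0 r')) η with h | h
    · refine (rieszFunctional_le_add_sdiff hφ U V (ball 0 r) (ball 0 r')).trans ?_
      gcongr
    · obtain ⟨e, s, he, hs, hlt⟩ := hpol U V hU hV hUρ hVρ hUr hVr h
      have hfin' := ne_top_of_le_ne_top hfin hlt
      refine (rieszFunctional_le_polarization hφ he s hU hV).trans <|
        ih (measurableSet_polarization e s hU) (measurableSet_polarization e s hV)
          (polarization_subset_closedBall he hs hUρ) (polarization_subset_closedBall he hs hVρ)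
          ((volume_polarization he s hU).trans_le hUr) ((volume_polarization he s hV).trans_le hVr)
          (add_ne_top.1 hfin').1 ?_
      refine (ENNReal.add_le_add_iff_right (add_ne_top.1 hfin').2).1 (hlt.trans (hk.trans_eq ?_))
      push_cast
      ring

lemma rieszFunctional_le_ball_of_subset (hφ : Antitone φ) (hfin : ∫⁻ x : E, φ ‖x‖₊ ≠ ⊤)
    (hU : MeasurableSet U) (hV : MeasurableSet V) (hUρ : U ⊆ closedBall 0 ρ)
    (hVρ : V ⊆ closedBall 0 ρ) (hUr : volume U ≤ volume (ball (0 : E) r))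
    (hVr : volume V ≤ volume (ball (0 : E) r')) :
    rieszFunctional φ U V ≤ rieszFunctional φ (ball (0 : E) r) (ball 0 r') := by
  have hlim : Tendsto (fun η ↦ rieszFunctional φ (ball (0 : E) r) (ball 0 r') +
      η * ∫⁻ x : E, φ ‖x‖₊) (𝓝[>] 0) (𝓝 (rieszFunctional φ (ball (0 : E) r) (ball 0 r'))) := by
    simpa using (ENNReal.Tendsto.mul_const (tendsto_nhdsWithin_of_tendsto_nhds (a := 0) tendsto_id)
      (.inr hfin)).const_add (rieszFunctional φ (ball (0 : E) r) (ball 0 r'))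
  refine ge_of_tendsto hlim (eventually_mem_nhdsWithin.mono fun η (hη : 0 < η) ↦ ?_)
  exact rieszFunctional_le_ball_add_mul hφ hη.ne' hU hV hUρ hVρ hUr hVr

lemma tendsto_volume_sdiff_closedBall (hU : MeasurableSet U) (hfin : volume U ≠ ⊤) :
    Tendsto (fun k : ℕ ↦ volume (U \ closedBall 0 (k : ℝ))) atTop (𝓝 0) := by
  have h := tendsto_measure_iInter_atTop (μ := (volume : Measure E))
    (s := fun k : ℕ ↦ U \ closedBall 0 (k : ℝ))
    (fun k ↦ (hU.diff measurableSet_closedBall).nullMeasurableSet)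
    (fun a b hab ↦ sdiff_subset_sdiff_right (closedBall_subset_closedBall (by exact_mod_cast hab)))
    ⟨0, measure_ne_top_of_subset sdiff_subset hfin⟩
  rwa [← sdiff_iUnion, iUnion_closedBall_nat, sdiff_univ, measure_empty] at h

theorem rieszFunctional_le_ball (hφ : Antitone φ) (hfin : ∫⁻ x : E, φ ‖x‖₊ ≠ ⊤)
    (hU : MeasurableSet U) (hV : MeasurableSet V) (hUr : volume U ≤ volume (ball (0 : E) r))
    (hVr : volume V ≤ volume (ball (0 : E) r')) :
    rieszFunctional φ U V ≤ rieszFunctional φ (ball (0 : E) r) (ball 0 r') := by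
  have hlim := ((ENNReal.Tendsto.mul_const
    ((tendsto_volume_sdiff_closedBall hU (hUr.trans_lt measure_ball_lt_top).ne).add
      (tendsto_volume_sdiff_closedBall hV (hVr.trans_lt measure_ball_lt_top).ne))
    (.inr hfin)).const_add (rieszFunctional φ (ball (0 : E) r) (ball 0 r')))
  rw [add_zero, zero_mul, add_zero] at hlim
  refine ge_of_tendsto' hlim fun k ↦ ?_
  refine (rieszFunctional_le_add_sdiff hφ U V (U ∩ closedBall 0 k) (V ∩ closedBall 0 k)).trans ?_
  simp only [Set.sdiff_self_inter]
  gcongr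
  exact rieszFunctional_le_ball_of_subset hφ hfin (hU.inter measurableSet_closedBall)
    (hV.inter measurableSet_closedBall) inter_subset_right inter_subset_right
    ((measure_mono inter_subset_left).trans hUr) ((measure_mono inter_subset_left).trans hVr)

end RieszInequality

/-! ### Polarized sets -/

section Polarized

variable {e z : E} {s s₀ a r : ℝ} {U V : Set E}

variable [MeasurableSpace E] [BorelSpace E]

lemma measurableSet_setOf_inner_le (e : E) (a : ℝ) : MeasurableSet {x : E | inner ℝ x e ≤ a} :=
  measurableSet_le (by fun_prop) measurable_const

lemma measurableSet_setOf_le_inner (e : E) (a : ℝ) : MeasurableSet {x : E | a ≤ inner ℝ x e} :=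
  measurableSet_le measurable_const (by fun_prop)

variable [FiniteDimensional ℝ E]

lemma tendsto_volume_inter_setOf_inner_le (e : E) (hU : MeasurableSet U) (hfin : volume U ≠ ⊤) :
    Tendsto (fun a : ℝ ↦ volume (U ∩ {x | inner ℝ x e ≤ a})) atBot (𝓝 0) := by
  have hempty : ⋂ a : ℝ, U ∩ {x | inner ℝ x e ≤ a} = ∅ :=
    eq_empty_of_forall_notMem fun x hx ↦
      (sub_one_lt (inner ℝ x e)).not_ge (mem_iInter.1 hx (inner ℝ x e - 1)).2
  rw [← measure_empty (μ := (volume : Measure E)), ← hempty]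
  exact tendsto_measure_iInter_atBot
    (fun a ↦ (hU.inter (measurableSet_setOf_inner_le e a)).nullMeasurableSet)
    (fun a b hab ↦ inter_subset_inter_right U fun x hx ↦ le_trans hx hab)
    ⟨0, measure_ne_top_of_subset inter_subset_left hfin⟩

lemma IsPolarized.volume_inter_setOf_le_inner_le (he : ‖e‖ = 1) (hU : MeasurableSet U)
    (h : IsPolarized e s U) (ha : s ≤ a) :
    volume (U ∩ {x | a ≤ inner ℝ x e}) ≤ volume (U ∩ {x | inner ℝ x e ≤ 2 * s - a}) := by
  rw [← (measurePreserving_mirror he s).measure_preimage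
    (hU.inter (measurableSet_setOf_le_inner e a)).nullMeasurableSet]
  refine measure_mono_ae ?_
  filter_upwards [h] with x hx ⟨hxU, hxa⟩
  have hxa : inner ℝ x e ≤ 2 * s - a := by
    rw [mem_ofPred_eq, inner_mirror he] at hxa
    linarith
  exact ⟨hx (by linarith) hxU, hxa⟩

lemma volume_eq_zero_of_forall_isPolarized (he : ‖e‖ = 1) (hU : MeasurableSet U)
    (hfin : volume U ≠ ⊤) (h : ∀ s, IsPolarized e s U) : volume U = 0 := by
  have hhalf (a : ℝ) : volume (U ∩ {x | a ≤ inner ℝ x e}) = 0 := by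
    have hlim := (tendsto_volume_inter_setOf_inner_le e hU hfin).comp
      (tendsto_atBot_add_const_right atBot (-a) (tendsto_id.const_mul_atBot two_pos))
    refine le_antisymm (ge_of_tendsto hlim ?_) zero_le
    filter_upwards [eventually_le_atBot a] with s hs
    exact (h s).volume_inter_setOf_le_inner_le he hU hs
  refine measure_mono_null (fun x hx ↦ ?_) (measure_iUnion_null fun k : ℕ ↦ hhalf (-k))
  obtain ⟨k, hk⟩ := exists_nat_ge (-inner ℝ x e)
  exact mem_iUnion.2 ⟨k, hx, neg_le.1 hk⟩

/-- The hyperplane of a polarization cannot lie on the wrong side of a centre of symmetry: the mass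
`m a` of `U` in `{x | ⟪x, e⟫ ≤ a}` would satisfy `m a ≤ m (a - 2 * (s₀ - s))` for all `a ≤ s₀`. -/
lemma IsPolarized.volume_eq_zero_of_lt (he : ‖e‖ = 1) (hU : MeasurableSet U)
    (hfin : volume U ≠ ⊤) {f : E → E} (hf : MeasurePreserving f volume volume)
    (hfU : f ⁻¹' U =ᵐ[volume] U) (hfe : ∀ x, inner ℝ (f x) e = 2 * s₀ - inner ℝ x e)
    (hs : s < s₀) (h : IsPolarized e s U) : volume U = 0 := by
  have hreflect (a : ℝ) : volume (U ∩ {x | inner ℝ x e ≤ a}) =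
      volume (U ∩ {x | 2 * s₀ - a ≤ inner ℝ x e}) := by
    rw [← hf.measure_preimage (hU.inter (measurableSet_setOf_inner_le e a)).nullMeasurableSet,
      preimage_inter]
    refine (measure_congr (hfU.inter (ae_eq_refl _))).trans (congrArg (fun s ↦ volume (U ∩ s)) ?_)
    ext x
    simp only [mem_preimage, mem_ofPred_eq, hfe, sub_le_comm]
  have hstep (a : ℝ) (ha : a ≤ s₀) : volume (U ∩ {x | inner ℝ x e ≤ a}) ≤
      volume (U ∩ {x | inner ℝ x e ≤ a - 2 * (s₀ - s)}) := by
    rw [hreflect, show a - 2 * (s₀ - s) = 2 * s - (2 * s₀ - a) by ring]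
    exact h.volume_inter_setOf_le_inner_le he hU (by linarith)
  have hiterate (k : ℕ) : volume (U ∩ {x | inner ℝ x e ≤ s₀}) ≤
      volume (U ∩ {x | inner ℝ x e ≤ s₀ - k * (2 * (s₀ - s))}) := by
    induction k with
    | zero => simp
    | succ k ih =>
      refine (ih.trans (hstep _ (sub_le_self _ ?_))).trans_eq ?_
      · have := sub_pos.2 hs
        positivity
      · push_cast
        ring_nf
  have hatBot : Tendsto (fun k : ℕ ↦ s₀ - (k : ℝ) * (2 * (s₀ - s))) atTop atBot :=
    tendsto_atBot_add_const_left _ _ (tendsto_neg_atTop_atBot.comp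
      (tendsto_natCast_atTop_atTop.atTop_mul_const (by linarith)))
  have hle : volume (U ∩ {x | inner ℝ x e ≤ s₀}) = 0 := le_antisymm
    (ge_of_tendsto' ((tendsto_volume_inter_setOf_inner_le e hU hfin).comp hatBot) hiterate) zero_le
  have hge : volume (U ∩ {x | s₀ ≤ inner ℝ x e}) = 0 := by
    rw [← hle, hreflect, two_mul, add_sub_cancel_right]
  exact measure_mono_null (fun x hx ↦ (le_total (inner ℝ x e) s₀).imp (⟨hx, ·⟩) (⟨hx, ·⟩))
    (measure_union_null hle hge)

lemma tendsto_volume_symmDiff_mirror_preimage (he : ‖e‖ = 1) (hU : MeasurableSet U)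
    (hfin : volume U ≠ ⊤) (s : ℝ) :
    Tendsto (fun t ↦ volume ((mirror e t ⁻¹' U) ∆ (mirror e s ⁻¹' U))) (𝓝 s) (𝓝 0) := by
  let σ : C(ℝ, C(E, E)) := ContinuousMap.curry
    ⟨fun q ↦ mirror e q.1 q.2, continuous_mirror.comp (continuous_const.prodMk continuous_id)⟩
  have hσ (t : ℝ) : MeasurePreserving (σ t) (volume : Measure E) volume :=
    measurePreserving_mirror he t
  exact tendsto_measure_symmDiff_preimage_nhds_zero (f := fun t ↦ σ t) (g := σ s)
    (σ.continuous.tendsto s) (Eventually.of_forall hσ) (hσ s) hU.nullMeasurableSet hfin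

lemma isClosed_setOf_isPolarized (he : ‖e‖ = 1) (hU : MeasurableSet U) (hfin : volume U ≠ ⊤) :
    IsClosed {s | IsPolarized e s U} := by
  refine isClosed_of_closure_subset fun s hs ↦ ?_
  have hbelow (b : ℝ) (hb : b < s) : ∀ᵐ x, inner ℝ x e ≤ b → mirror e s x ∈ U → x ∈ U := by
    refine ae_iff.2 (le_antisymm ?_ zero_le)
    refine ge_of_tendsto_of_frequently (tendsto_volume_symmDiff_mirror_preimage he hU hfin s)
      (((mem_closure_iff_frequently.1 hs).and_eventually (lt_mem_nhds hb)).mono ?_)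
    rintro t ⟨ht : IsPolarized e t U, hbt⟩
    refine measure_mono_ae ?_
    filter_upwards [ht] with x hx hbad
    simp only [Classical.not_imp] at hbad
    exact .inr ⟨hbad.2.1, fun hxt ↦ hbad.2.2 (hx (hbad.1.trans hbt.le) hxt)⟩
  filter_upwards [ae_all_iff.2 fun q : ℚ ↦ eventually_imp_distrib_left.2 (hbelow q)]
    with x hx hxs hxU
  rcases hxs.lt_or_eq with hlt | heq
  · obtain ⟨q, hxq, hqs⟩ := exists_rat_btwn hlt
    exact hx q hqs hxq.le hxU
  · rwa [mirror_eq_self heq] at hxU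

lemma mirror_preimage_ae_eq_iff (he : ‖e‖ = 1) :
    mirror e s ⁻¹' U =ᵐ[volume] U ↔ IsPolarized e s U ∧ IsPolarized (-e) (-s) U := by
  constructor
  · intro h
    rw [isPolarized_neg_neg_iff he]
    constructor <;> filter_upwards [h.mem_iff] with x hx _
    exacts [hx.1, hx.2]
  · rintro ⟨h, h'⟩
    have h₁ := (isPolarized_neg_neg_iff he).1 h'
    have h₂ := (isPolarized_neg_neg_iff (e := -e) (s := -s) (by rwa [norm_neg])).1
      (by rwa [neg_neg, neg_neg])
    rw [mirror_neg_neg] at h₂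
    rw [IsPolarized, mirror_neg_neg] at h'
    filter_upwards [h, h', h₁, h₂] with x hx hx' hx₁ hx₂
    simp only [inner_neg_right, neg_le_neg_iff] at hx' hx₂
    rcases le_total (inner ℝ x e) s with hxs | hxs
    exacts [propext ⟨hx hxs, hx₁ hxs⟩, propext ⟨hx' hxs, hx₂ hxs⟩]

lemma ae_eq_ball_zero_of_isPolarized (hU : MeasurableSet U)
    (hr : volume U = volume (ball (0 : E) r))
    (h : ∀ (e : E) (s : ℝ), ‖e‖ = 1 → 0 < s → IsPolarized e s U) :
    U =ᵐ[volume] ball (0 : E) r := by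
  by_contra hne
  have hfin : volume (ball (0 : E) r) ≠ ⊤ := measure_ball_lt_top.ne
  have hhole : volume (ball 0 r \ U) ≠ 0 := fun h0 ↦ hne (ae_eq_of_ae_subset_of_measure_ge
    (ae_le_set.2 h0) hr.le measurableSet_ball.nullMeasurableSet (hr ▸ hfin)).symm
  have hout : volume (U \ ball 0 r) ≠ 0 := fun h0 ↦ hne (ae_eq_of_ae_subset_of_measure_ge
    (ae_le_set.2 h0) hr.ge hU.nullMeasurableSet hfin)
  obtain ⟨k, hk⟩ : ∃ k : ℕ, volume ((U ∩ closedBall 0 (k : ℝ)) \ ball 0 r) ≠ 0 := by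
    by_contra! hcon
    refine hout (measure_mono_null ?_ (measure_iUnion_null hcon))
    rw [← iUnion_sdiff, ← inter_iUnion, iUnion_closedBall_nat, inter_univ]
  obtain ⟨c, hc, hmirror⟩ := exists_le_volume_hole_inter_mirror (E := E) k r
    (lt_min (pos_iff_ne_zero.2 hk) (pos_iff_ne_zero.2 hhole)).ne'
  obtain ⟨e, s, he, hs, hle⟩ := hmirror U hU (min_le_left _ _) (min_le_right _ _)
  refine hc (le_antisymm (hle.trans_eq ?_) zero_le)
  refine measure_mono_null ?_ (ae_iff.1 (h e s he hs))
  rintro x ⟨⟨hxr, hxU⟩, hσU, hσr⟩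
  rw [mem_ball_zero_iff] at hxr hσr
  have hxs := inner_lt_of_norm_lt_norm_mirror he hs (hxr.trans_le (not_lt.1 hσr))
  exact fun hx ↦ hxU (hx hxs.le hσU)

lemma ae_eq_ball_of_isPolarized (hU : MeasurableSet U)
    (hr : volume U = volume (ball (0 : E) r))
    (h : ∀ (e : E) (s : ℝ), ‖e‖ = 1 → inner ℝ z e < s → IsPolarized e s U) :
    U =ᵐ[volume] ball z r := by
  have hadd := measurePreserving_add_right (volume : Measure E) z
  have hsub := measurePreserving_sub_right (volume : Measure E) z
  have hball : (· + z) ⁻¹' U =ᵐ[volume] ball (0 : E) r := by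
    refine ae_eq_ball_zero_of_isPolarized (hadd.measurable hU)
      ((hadd.measure_preimage hU.nullMeasurableSet).trans hr) fun e s he hs ↦ ?_
    have hpol := h e (s + inner ℝ z e) he (by linarith)
    filter_upwards [hadd.quasiMeasurePreserving.ae hpol] with x hx hxs
    have hmirror := mirror_sub e s (x + z) z
    rw [add_sub_cancel_right, eq_sub_iff_add_eq] at hmirror
    rw [mem_preimage, hmirror]
    exact hx (by rwa [inner_add_left, add_le_add_iff_right])
  have h := hsub.quasiMeasurePreserving.preimage_ae_eq hball
  simpa [← preimage_comp, Function.comp_def, ball, dist_eq_norm] using h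

lemma pointReflection_preimage_ae_eq {ι : Type*} [Fintype ι] (b : OrthonormalBasis ι ℝ E)
    (h : ∀ i, mirror (b i) (inner ℝ z (b i)) ⁻¹' U =ᵐ[volume] U) :
    Equiv.pointReflection z ⁻¹' U =ᵐ[volume] U := by
  classical
  let f (S : Finset ι) (x : E) : E := x + ∑ i ∈ S, (2 * inner ℝ (z - x) (b i)) • b i
  have hinsert {j : ι} {S : Finset ι} (hj : j ∉ S) :
      f (insert j S) = mirror (b j) (inner ℝ z (b j)) ∘ f S := by
    funext x
    have horth : inner ℝ (∑ i ∈ S, (2 * inner ℝ (z - x) (b i)) • b i) (b j) = 0 := by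
      rw [sum_inner]
      refine Finset.sum_eq_zero fun i hi ↦ ?_
      rw [real_inner_smul_left, b.inner_eq_zero (ne_of_mem_of_not_mem hi hj), mul_zero]
    simp only [f, mirror, Function.comp_apply, inner_add_left, horth, add_zero,
      Finset.sum_insert hj, ← inner_sub_left]
    abel
  have hf (S : Finset ι) : MeasurePreserving (f S) (volume : Measure E) volume ∧
      f S ⁻¹' U =ᵐ[volume] U := by
    induction S using Finset.induction_on with
    | empty =>
      simp only [f, Finset.sum_empty, add_zero]
      exact ⟨.id _, ae_eq_refl _⟩
    | insert j S hj ih =>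
      rw [hinsert hj, preimage_comp]
      exact ⟨(measurePreserving_mirror (b.norm_eq_one j) _).comp ih.1,
        (ih.1.quasiMeasurePreserving.preimage_ae_eq (h j)).trans ih.2⟩
  have huniv : f Finset.univ = Equiv.pointReflection z := by
    funext x
    simp only [f, mul_smul, ← Finset.smul_sum, real_inner_comm _ (z - x), b.sum_repr',
      Equiv.pointReflection_apply, vsub_eq_sub, vadd_eq_add]
    module
  exact huniv ▸ (hf Finset.univ).2

end Polarized

/-! ### The equality case of the Riesz inequality for two sets -/

section EqualityCase

variable [MeasurableSpace E] [BorelSpace E] [FiniteDimensional ℝ E]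

/-- For every half-space, `V` is polarized with respect to it or `U` is polarized with respect to
the complementary half-space. Maximizers of the Riesz functional have this property. -/
def PolarizationDichotomy (U V : Set E) : Prop :=
  ∀ (e : E) (s : ℝ), ‖e‖ = 1 → IsPolarized (-e) (-s) U ∨ IsPolarized e s V

namespace PolarizationDichotomy

variable {e : E} {s s₀ : ℝ} {U V : Set E}

lemma symm (h : PolarizationDichotomy U V) : PolarizationDichotomy V U := fun e s he ↦ by
  simpa only [neg_neg, or_comm] using h (-e) (-s) (by rwa [norm_neg])

lemma isPolarized_right (h : PolarizationDichotomy U V) (hU : MeasurableSet U)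
    (hfin : volume U ≠ ⊤) (hU0 : volume U ≠ 0) (he : ‖e‖ = 1) {f : E → E}
    (hf : MeasurePreserving f volume volume) (hfU : f ⁻¹' U =ᵐ[volume] U)
    (hfe : ∀ x, inner ℝ (f x) e = 2 * s₀ - inner ℝ x e) (hs : s₀ < s) : IsPolarized e s V :=
  (h e s he).resolve_left fun hpol ↦ hU0 <|
    hpol.volume_eq_zero_of_lt (s₀ := -s₀) (by rwa [norm_neg]) hU hfin hf hfU
      (fun x ↦ by rw [inner_neg_right, inner_neg_right, hfe]; ring) (neg_lt_neg hs)

lemma mirror_preimage_ae_eq (h : PolarizationDichotomy U V) (hU : MeasurableSet U)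
    (hUfin : volume U ≠ ⊤) (hU0 : volume U ≠ 0) (hV : MeasurableSet V) (hVfin : volume V ≠ ⊤)
    (he : ‖e‖ = 1) (hsymm : mirror e s ⁻¹' U =ᵐ[volume] U) :
    mirror e s ⁻¹' V =ᵐ[volume] V := by
  have key {e : E} {s : ℝ} (he : ‖e‖ = 1) (hsymm : mirror e s ⁻¹' U =ᵐ[volume] U) :
      IsPolarized e s V := by
    refine (isClosed_setOf_isPolarized he hV hVfin).closure_subset_iff.2 ?_
      (closure_Ioi s ▸ self_mem_Ici : s ∈ closure (Ioi s))
    exact fun t ht ↦ h.isPolarized_right hU hUfin hU0 he (measurePreserving_mirror he s) hsymm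
      (inner_mirror he s) ht
  exact (mirror_preimage_ae_eq_iff he).2
    ⟨key he hsymm, key (by rwa [norm_neg]) (by rwa [mirror_neg_neg])⟩

lemma exists_isPolarized (h : PolarizationDichotomy U V) (hU : MeasurableSet U)
    (hUfin : volume U ≠ ⊤) (hU0 : volume U ≠ 0) (hV : MeasurableSet V) (hVfin : volume V ≠ ⊤)
    (hV0 : volume V ≠ 0) (he : ‖e‖ = 1) : ∃ s, IsPolarized (-e) (-s) U ∧ IsPolarized e s V := by
  have he' : ‖-e‖ = 1 := by rwa [norm_neg]
  have hclosed := (isClosed_setOf_isPolarized he' hU hUfin).preimage continuous_neg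
  have hnonempty : {s | IsPolarized e s V}.Nonempty := by
    by_contra! hempty
    refine hU0 (volume_eq_zero_of_forall_isPolarized he' hU hUfin fun s ↦ ?_)
    exact neg_neg s ▸ (h e (-s) he).resolve_right (eq_empty_iff_forall_notMem.1 hempty (-s))
  have hnonempty' : {s | IsPolarized (-e) (-s) U}.Nonempty := by
    by_contra! hempty
    refine hV0 (volume_eq_zero_of_forall_isPolarized he hV hVfin fun s ↦ ?_)
    exact (h e s he).resolve_left (eq_empty_iff_forall_notMem.1 hempty s)
  obtain ⟨s, -, hs⟩ := isPreconnected_closed_iff.1 isPreconnected_univ _ _ hclosed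
    (isClosed_setOf_isPolarized he hV hVfin) (fun s _ ↦ h e s he) (by simpa using hnonempty')
    (by simpa using hnonempty)
  exact ⟨s, hs⟩

lemma exists_mirror_preimage_ae_eq (h : PolarizationDichotomy U V) (hU : MeasurableSet U)
    (hUfin : volume U ≠ ⊤) (hU0 : volume U ≠ 0) (hV : MeasurableSet V) (hVfin : volume V ≠ ⊤)
    (hV0 : volume V ≠ 0) (he : ‖e‖ = 1) :
    ∃ s, mirror e s ⁻¹' U =ᵐ[volume] U ∧ mirror e s ⁻¹' V =ᵐ[volume] V := by
  obtain ⟨s, hsU, hsV⟩ := h.exists_isPolarized hU hUfin hU0 hV hVfin hV0 he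
  refine ⟨s, ?_⟩
  rcases h.symm e s he with hV' | hU'
  · have hsymm := (mirror_preimage_ae_eq_iff he).2 ⟨hsV, hV'⟩
    exact ⟨h.symm.mirror_preimage_ae_eq hV hVfin hV0 hU hUfin he hsymm, hsymm⟩
  · have hsymm := (mirror_preimage_ae_eq_iff he).2 ⟨hU', hsU⟩
    exact ⟨hsymm, h.mirror_preimage_ae_eq hU hUfin hU0 hV hVfin he hsymm⟩

lemma exists_pointReflection_preimage_ae_eq (h : PolarizationDichotomy U V)
    (hU : MeasurableSet U) (hUfin : volume U ≠ ⊤) (hU0 : volume U ≠ 0) (hV : MeasurableSet V)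
    (hVfin : volume V ≠ ⊤) (hV0 : volume V ≠ 0) :
    ∃ z : E, Equiv.pointReflection z ⁻¹' U =ᵐ[volume] U ∧
      Equiv.pointReflection z ⁻¹' V =ᵐ[volume] V := by
  let b := stdOrthonormalBasis ℝ E
  choose s hsU hsV using fun i ↦
    h.exists_mirror_preimage_ae_eq hU hUfin hU0 hV hVfin hV0 (b.norm_eq_one i)
  have hinner (i) : inner ℝ (∑ j, s j • b j) (b i) = s i := by
    simp [sum_inner, real_inner_smul_left, b.inner_eq_ite]
  exact ⟨∑ j, s j • b j, pointReflection_preimage_ae_eq b fun i ↦ by rw [hinner]; exact hsU i,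
    pointReflection_preimage_ae_eq b fun i ↦ by rw [hinner]; exact hsV i⟩

lemma exists_ae_eq_ball {r r' : ℝ} (h : PolarizationDichotomy U V) (hU : MeasurableSet U)
    (hV : MeasurableSet V) (hUr : volume U = volume (ball (0 : E) r))
    (hVr : volume V = volume (ball (0 : E) r')) (hU0 : volume U ≠ 0) (hV0 : volume V ≠ 0) :
    ∃ z : E, U =ᵐ[volume] ball z r ∧ V =ᵐ[volume] ball z r' := by
  have hUfin : volume U ≠ ⊤ := hUr ▸ measure_ball_lt_top.ne
  have hVfin : volume V ≠ ⊤ := hVr ▸ measure_ball_lt_top.ne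
  obtain ⟨z, hzU, hzV⟩ := h.exists_pointReflection_preimage_ae_eq hU hUfin hU0 hV hVfin hV0
  have hmp : MeasurePreserving (Equiv.pointReflection z) (volume : Measure E) volume :=
    measurePreserving_isometryEquiv (AffineIsometryEquiv.pointReflection ℝ z).toIsometryEquiv
  have hinner (e x : E) :
      inner ℝ (Equiv.pointReflection z x) e = 2 * inner ℝ z e - inner ℝ x e := by
    rw [Equiv.pointReflection_apply, vsub_eq_sub, vadd_eq_add, inner_add_left, inner_sub_left]
    ring
  exact ⟨z, ae_eq_ball_of_isPolarized hU hUr fun e s he hs ↦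
      h.symm.isPolarized_right hV hVfin hV0 he hmp hzV (hinner e) hs,
    ae_eq_ball_of_isPolarized hV hVr fun e s he hs ↦
      h.isPolarized_right hU hUfin hU0 he hmp hzU (hinner e) hs⟩

end PolarizationDichotomy

variable {φ : ℝ≥0 → ℝ≥0∞} {U V : Set E} {r r' : ℝ}

lemma rieszFunctional_ne_top (hφ : Antitone φ) (hfin : ∫⁻ x : E, φ ‖x‖₊ ≠ ⊤)
    (hU : volume U ≠ ⊤) (V : Set E) : rieszFunctional φ U V ≠ ⊤ := by
  refine ne_top_of_le_ne_top (ENNReal.mul_ne_top hU hfin) ?_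
  rw [← rieszFunctional_univ_right hφ]
  exact lintegral_mono_set (prod_mono_right (subset_univ V))

theorem exists_ae_eq_ball_of_ball_le_rieszFunctional (hφ : StrictAnti φ)
    (hfin : ∫⁻ x : E, φ ‖x‖₊ ≠ ⊤) (hU : MeasurableSet U) (hV : MeasurableSet V)
    (hUr : volume U = volume (ball (0 : E) r)) (hVr : volume V = volume (ball (0 : E) r'))
    (hU0 : volume U ≠ 0) (hV0 : volume V ≠ 0)
    (h : rieszFunctional φ (ball (0 : E) r) (ball 0 r') ≤ rieszFunctional φ U V) :
    ∃ z : E, U =ᵐ[volume] ball z r ∧ V =ᵐ[volume] ball z r' := by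
  refine PolarizationDichotomy.exists_ae_eq_ball (fun e s he ↦ ?_) hU hV hUr hVr hU0 hV0
  refine isPolarized_of_rieszFunctional_polarization_le hφ he hU hV
    (rieszFunctional_ne_top hφ.antitone hfin (hUr ▸ measure_ball_lt_top.ne) V) (le_trans ?_ h)
  exact rieszFunctional_le_ball hφ.antitone hfin (measurableSet_polarization e s hU)
    (measurableSet_polarization e s hV) ((volume_polarization he s hU).trans_le hUr.le)
    ((volume_polarization he s hV).trans_le hVr.le)

end EqualityCase

/-! ### Equality for symmetrized sets -/

section Symmetrization

variable [MeasurableSpace E] [BorelSpace E] [FiniteDimensional ℝ E]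

/-- `U'` is a symmetrization of `U`: up to a null set it is a ball centred at the origin, and it
has the same volume as `U`. -/
def IsSymmetrization (U' U : Set E) : Prop :=
  ∃ r : ℝ, U' =ᵐ[volume] ball 0 r ∧ volume U = volume (ball (0 : E) r)

variable {φ : ℝ≥0 → ℝ≥0∞} {U V U' V' : Set E}

lemma rieszFunctional_eq_zero_of_left (φ : ℝ≥0 → ℝ≥0∞) (hU : volume U = 0) (V : Set E) :
    rieszFunctional φ U V = 0 :=
  setLIntegral_measure_zero _ _ <| by
    rw [Measure.volume_eq_prod, Measure.prod_prod, hU, zero_mul]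

namespace IsSymmetrization

lemma volume_eq (hU : IsSymmetrization U' U) : volume U' = volume U := by
  obtain ⟨r, hU', hUr⟩ := hU
  rw [measure_congr hU', hUr]

lemma volume_ne_top (hU : IsSymmetrization U' U) : volume U ≠ ⊤ := by
  obtain ⟨r, -, hUr⟩ := hU
  exact hUr ▸ measure_ball_lt_top.ne

theorem rieszFunctional_le (hU' : IsSymmetrization U' U) (hV' : IsSymmetrization V' V)
    (hφ : Antitone φ) (hfin : ∫⁻ x : E, φ ‖x‖₊ ≠ ⊤) (hU : MeasurableSet U)
    (hV : MeasurableSet V) : rieszFunctional φ U V ≤ rieszFunctional φ U' V' := by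
  obtain ⟨r, hUb, hUr⟩ := hU'
  obtain ⟨r', hVb, hVr⟩ := hV'
  rw [rieszFunctional_congr_ae hUb hVb]
  exact rieszFunctional_le_ball hφ hfin hU hV hUr.le hVr.le

theorem exists_ae_eq_translate (hU' : IsSymmetrization U' U) (hV' : IsSymmetrization V' V)
    (hφ : StrictAnti φ) (hfin : ∫⁻ x : E, φ ‖x‖₊ ≠ ⊤) (hU : MeasurableSet U)
    (hV : MeasurableSet V) (hU0 : volume U ≠ 0) (hV0 : volume V ≠ 0)
    (h : rieszFunctional φ U' V' ≤ rieszFunctional φ U V) :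
    ∃ z : E, U =ᵐ[volume] (· + z) ⁻¹' U' ∧ V =ᵐ[volume] (· + z) ⁻¹' V' := by
  obtain ⟨r, hUb, hUr⟩ := hU'
  obtain ⟨r', hVb, hVr⟩ := hV'
  rw [rieszFunctional_congr_ae hUb hVb] at h
  obtain ⟨z, hUz, hVz⟩ :=
    exists_ae_eq_ball_of_ball_le_rieszFunctional hφ hfin hU hV hUr hVr hU0 hV0 h
  have hball (r : ℝ) : (· + -z) ⁻¹' ball (0 : E) r = ball z r := by simp
  have hqmp := (measurePreserving_add_right (volume : Measure E) (-z)).quasiMeasurePreserving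
  refine ⟨-z, hUz.trans ?_, hVz.trans ?_⟩
  · exact hball r ▸ (hqmp.preimage_ae_eq hUb).symm
  · exact hball r' ▸ (hqmp.preimage_ae_eq hVb).symm

theorem rieszFunctional_eq_iff (hU' : IsSymmetrization U' U) (hV' : IsSymmetrization V' V)
    (hφ : StrictAnti φ) (hfin : ∫⁻ x : E, φ ‖x‖₊ ≠ ⊤) (hU : MeasurableSet U)
    (hV : MeasurableSet V) :
    rieszFunctional φ U' V' = rieszFunctional φ U V ↔ (volume U ≠ 0 → volume V ≠ 0 →
      ∃ z : E, U =ᵐ[volume] (· + z) ⁻¹' U' ∧ V =ᵐ[volume] (· + z) ⁻¹' V') := by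
  refine ⟨fun h hU0 hV0 ↦ hU'.exists_ae_eq_translate hV' hφ hfin hU hV hU0 hV0 h.le, fun h ↦ ?_⟩
  by_cases hU0 : volume U = 0
  · rw [rieszFunctional_eq_zero_of_left φ (hU'.volume_eq.trans hU0),
      rieszFunctional_eq_zero_of_left φ hU0]
  by_cases hV0 : volume V = 0
  · rw [rieszFunctional_comm, rieszFunctional_eq_zero_of_left φ (hV'.volume_eq.trans hV0),
      rieszFunctional_comm, rieszFunctional_eq_zero_of_left φ hV0]
  obtain ⟨z, hUz, hVz⟩ := h hU0 hV0
  rw [rieszFunctional_congr_ae hUz hVz]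
  exact (rieszFunctional_preimage_isometryEquiv φ (IsometryEquiv.addRight z) U' V').symm

end IsSymmetrization

end Symmetrization

/-! ### The mismatch of two sets -/

lemma setLIntegral_symmDiff_add {α : Type*} [MeasurableSpace α] {μ : Measure α} {A B : Set α}
    (hA : MeasurableSet A) (hB : MeasurableSet B) (f : α → ℝ≥0∞) :
    ∫⁻ x in A ∆ B, f x ∂μ + 2 * ∫⁻ x in A ∩ B, f x ∂μ = ∫⁻ x in A, f x ∂μ + ∫⁻ x in B, f x ∂μ := by
  rw [Set.symmDiff_def, lintegral_union (hB.diff hA) disjoint_sdiff_sdiff,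
    ← lintegral_inter_add_sdiff f A hB, ← lintegral_inter_add_sdiff f B hA, inter_comm B A]
  ring

section Mismatch

variable [MeasurableSpace E] [BorelSpace E] [FiniteDimensional ℝ E]

/-- The `φ`-weighted measure of the pairs `(x, y)` for which exactly one of `x ∈ U` and `y ∈ V`
holds. For superlevel sets `U = {τ < u}` and `V = {τ < v}`, it is the contribution of the level
`τ` to the double integral of `|u x - v y|`. -/
noncomputable def mismatch (φ : ℝ≥0 → ℝ≥0∞) (U V : Set E) : ℝ≥0∞ :=
  ∫⁻ p in (Prod.fst ⁻¹' U) ∆ (Prod.snd ⁻¹' V), φ (nndist p.1 p.2)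

variable {φ : ℝ≥0 → ℝ≥0∞} {U V U' V' : Set E}

lemma mismatch_add_two_mul_rieszFunctional (hφ : Antitone φ) (hU : MeasurableSet U)
    (hV : MeasurableSet V) : mismatch φ U V + 2 * rieszFunctional φ U V =
      (volume U + volume V) * ∫⁻ x : E, φ ‖x‖₊ := by
  rw [add_mul, ← rieszFunctional_univ_right hφ, ← rieszFunctional_univ_left hφ]
  simp only [rieszFunctional, prod_univ, univ_prod]
  exact setLIntegral_symmDiff_add (measurable_fst hU) (measurable_snd hV) _

namespace IsSymmetrization

lemma mismatch_add_eq (hUU' : IsSymmetrization U' U) (hVV' : IsSymmetrization V' V)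
    (hφ : Antitone φ) (hU : MeasurableSet U) (hV : MeasurableSet V) (hU' : MeasurableSet U')
    (hV' : MeasurableSet V') : mismatch φ U' V' + 2 * rieszFunctional φ U' V' =
      mismatch φ U V + 2 * rieszFunctional φ U V := by
  rw [mismatch_add_two_mul_rieszFunctional hφ hU hV,
    mismatch_add_two_mul_rieszFunctional hφ hU' hV', hUU'.volume_eq, hVV'.volume_eq]

theorem mismatch_le (hUU' : IsSymmetrization U' U) (hVV' : IsSymmetrization V' V)
    (hφ : Antitone φ) (hfin : ∫⁻ x : E, φ ‖x‖₊ ≠ ⊤) (hU : MeasurableSet U)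
    (hV : MeasurableSet V) (hU' : MeasurableSet U') (hV' : MeasurableSet V') :
    mismatch φ U' V' ≤ mismatch φ U V := by
  have htop : 2 * rieszFunctional φ U' V' ≠ ⊤ := ENNReal.mul_ne_top ENNReal.ofNat_ne_top
    (rieszFunctional_ne_top hφ hfin (hUU'.volume_eq ▸ hUU'.volume_ne_top) V')
  refine (ENNReal.add_le_add_iff_right htop).1 ?_
  rw [hUU'.mismatch_add_eq hVV' hφ hU hV hU' hV']
  gcongr
  exact hUU'.rieszFunctional_le hVV' hφ hfin hU hV

lemma mismatch_eq_iff (hUU' : IsSymmetrization U' U) (hVV' : IsSymmetrization V' V)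
    (hφ : Antitone φ) (hfin : ∫⁻ x : E, φ ‖x‖₊ ≠ ⊤) (hU : MeasurableSet U)
    (hV : MeasurableSet V) (hU' : MeasurableSet U') (hV' : MeasurableSet V') :
    mismatch φ U' V' = mismatch φ U V ↔ rieszFunctional φ U' V' = rieszFunctional φ U V := by
  have hadd := hUU'.mismatch_add_eq hVV' hφ hU hV hU' hV'
  have hR : 2 * rieszFunctional φ U V ≠ ⊤ := ENNReal.mul_ne_top ENNReal.ofNat_ne_top
    (rieszFunctional_ne_top hφ hfin hUU'.volume_ne_top V)
  have hm : mismatch φ U V ≠ ⊤ := ne_top_of_le_ne_top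
    (ENNReal.mul_ne_top (ENNReal.add_ne_top.2 ⟨hUU'.volume_ne_top, hVV'.volume_ne_top⟩) hfin)
    (le_self_add.trans (mismatch_add_two_mul_rieszFunctional hφ hU hV).le)
  constructor <;> intro h <;> rw [h] at hadd
  · exact (ENNReal.mul_right_inj two_ne_zero ENNReal.ofNat_ne_top).1
      ((ENNReal.add_right_inj hm).1 hadd)
  · exact (ENNReal.add_left_inj hR).1 hadd

end IsSymmetrization

end Mismatch

/-! ### Layer cake decomposition -/

section LayerCake

lemma volume_restrict_Iio_symmDiff_Iio {a b : ℝ} (ha : 0 ≤ a) (hb : 0 ≤ b) :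
    volume.restrict (Ioi 0) (Iio a ∆ Iio b) = ENNReal.ofReal |a - b| := by
  wlog hab : a ≤ b generalizing a b
  · rw [symmDiff_comm, abs_sub_comm, this hb ha (le_of_not_ge hab)]
  have hsd : Iio a ∆ Iio b = Ico a b := by
    rw [symmDiff_of_le (Iio_subset_Iio hab), Iio_sdiff_Iio]
  rw [hsd, restrict_Ioi_eq_restrict_Ici, Measure.restrict_eq_self _
    (Ico_subset_Icc_self.trans (Icc_subset_Ici_self.trans (Ici_subset_Ici.2 ha))),
    Real.volume_Ico, abs_sub_comm, abs_of_nonneg (sub_nonneg.2 hab)]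

lemma measurableSet_setOf_lt_symmDiff {α β : Type*} [MeasurableSpace α] [MeasurableSpace β]
    {a : α → ℝ} {b : β → ℝ} (ha : Measurable a) (hb : Measurable b) :
    MeasurableSet ({q : (α × β) × ℝ | q.2 < a q.1.1} ∆ {q : (α × β) × ℝ | q.2 < b q.1.2}) :=
  (measurableSet_lt measurable_snd (by fun_prop)).symmDiff
    (measurableSet_lt measurable_snd (by fun_prop))

variable [MeasurableSpace E] [BorelSpace E] [FiniteDimensional ℝ E] {φ : ℝ≥0 → ℝ≥0∞}
  {a b : E → ℝ}

lemma mismatch_setOf_lt_eq_lintegral_indicator (φ : ℝ≥0 → ℝ≥0∞) (ha : Measurable a)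
    (hb : Measurable b) (τ : ℝ) : mismatch φ {x | τ < a x} {x | τ < b x} =
      ∫⁻ p : E × E, ({q : (E × E) × ℝ | q.2 < a q.1.1} ∆ {q | q.2 < b q.1.2}).indicator
        (fun q ↦ φ (nndist q.1.1 q.1.2)) (p, τ) :=
  (lintegral_indicator (measurable_prodMk_right (measurableSet_setOf_lt_symmDiff ha hb)) _).symm

lemma measurable_indicator_kernel (hφ : Antitone φ) (ha : Measurable a) (hb : Measurable b) :
    Measurable (({q : (E × E) × ℝ | q.2 < a q.1.1} ∆ {q | q.2 < b q.1.2}).indicator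
      fun q ↦ φ (nndist q.1.1 q.1.2)) :=
  ((measurable_kernel hφ).comp measurable_fst).indicator (measurableSet_setOf_lt_symmDiff ha hb)

lemma measurable_mismatch_setOf_lt (hφ : Antitone φ) (ha : Measurable a) (hb : Measurable b) :
    Measurable fun τ ↦ mismatch φ {x | τ < a x} {x | τ < b x} := by
  simp only [mismatch_setOf_lt_eq_lintegral_indicator φ ha hb]
  exact (measurable_indicator_kernel hφ ha hb).lintegral_prod_left'

theorem lintegral_lintegral_ofReal_abs_sub_mul (hφ : Antitone φ) (ha : Measurable a)
    (hb : Measurable b) (ha0 : ∀ x, 0 ≤ a x) (hb0 : ∀ x, 0 ≤ b x) :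
    ∫⁻ x, ∫⁻ y, ENNReal.ofReal |a x - b y| * φ (nndist x y) =
      ∫⁻ τ in Ioi 0, mismatch φ {x | τ < a x} {x | τ < b x} := by
  have hmeas : Measurable fun p : E × E ↦ ENNReal.ofReal |a p.1 - b p.2| * φ (nndist p.1 p.2) :=
    Measurable.mul (by fun_prop) (measurable_kernel hφ)
  simp only [mismatch_setOf_lt_eq_lintegral_indicator φ ha hb]
  have hind := (measurable_indicator_kernel hφ ha hb).aemeasurable
    (μ := (volume.prod volume).prod (volume.restrict (Ioi 0)))
  rw [lintegral_lintegral hmeas.aemeasurable, Measure.volume_eq_prod,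
    ← lintegral_prod_symm _ hind, lintegral_prod _ hind]
  refine lintegral_congr fun p ↦ ?_
  rw [← volume_restrict_Iio_symmDiff_Iio (ha0 p.1) (hb0 p.2), mul_comm,
    ← lintegral_indicator_const (measurableSet_Iio.symmDiff measurableSet_Iio)]
  rfl

end LayerCake

/-! ### Equality for symmetric rearrangements -/

section Rearrangement

lemma measure_setOf_lt_le_of_ae {α : Type*} [MeasurableSpace α] {μ : Measure α} {w : α → ℝ}
    {τ : ℝ} {c : ℝ≥0∞} (h : ∀ᵐ t : ℝ, τ < t → μ {x | t < w x} ≤ c) : μ {x | τ < w x} ≤ c := by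
  obtain ⟨t, ht_anti, ht, ht_lim⟩ := (Measure.dense_of_ae h).exists_seq_strictAnti_tendsto τ
  have hunion : {x | τ < w x} = ⋃ k, {x | t k < w x} := by
    ext x
    simp only [mem_ofPred_eq, mem_iUnion]
    exact ⟨fun hx ↦ (ht_lim.eventually_lt_const hx).exists, fun ⟨k, hk⟩ ↦ (ht k).1.trans hk⟩
  have hmono : Monotone fun k ↦ {x | t k < w x} := fun i j hij x hx ↦
    (ht_anti.antitone hij).trans_lt hx
  rw [hunion, hmono.measure_iUnion]
  exact iSup_le fun k ↦ (ht k).2 (ht k).1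

variable [MeasurableSpace E] [BorelSpace E] [FiniteDimensional ℝ E] {φ : ℝ≥0 → ℝ≥0∞}
  {u v u' v' : E → ℝ} {τ : ℝ} {c : ℝ≥0∞}

lemma rieszFunctional_setOf_lt_le_of_ae
    (h : ∀ᵐ t : ℝ, τ < t → rieszFunctional φ {x | t < u x} {x | t < v x} ≤ c) :
    rieszFunctional φ {x | τ < u x} {x | τ < v x} ≤ c := by
  have hlevel (t : ℝ) : rieszFunctional φ {x | t < u x} {x | t < v x} =
      (volume.withDensity fun p : E × E ↦ φ (nndist p.1 p.2))
        {p | t < min (u p.1) (v p.2)} := by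
    simp only [withDensity_apply', lt_min_iff]
    rfl
  simp only [hlevel] at h ⊢
  exact measure_setOf_lt_le_of_ae h

/-- `u'` is a symmetric rearrangement of `u`: each positive superlevel set of `u'` is a
symmetrization of that of `u`. -/
def IsSymmetricRearrangement (u' u : E → ℝ) : Prop :=
  ∀ τ > 0, IsSymmetrization {x | τ < u' x} {x | τ < u x}

namespace IsSymmetricRearrangement

lemma ae_mismatch_eq (hu' : IsSymmetricRearrangement u' u) (hv' : IsSymmetricRearrangement v' v)
    (hφ : Antitone φ) (hfin : ∫⁻ x : E, φ ‖x‖₊ ≠ ⊤) (hum : Measurable u) (hvm : Measurable v)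
    (hum' : Measurable u') (hvm' : Measurable v')
    (hmis : ∫⁻ τ in Ioi 0, mismatch φ {x | τ < u x} {x | τ < v x} ≠ ⊤)
    (heq : ∫⁻ τ in Ioi 0, mismatch φ {x | τ < u' x} {x | τ < v' x} =
      ∫⁻ τ in Ioi 0, mismatch φ {x | τ < u x} {x | τ < v x}) :
    ∀ᵐ τ : ℝ, 0 < τ →
      mismatch φ {x | τ < u' x} {x | τ < v' x} = mismatch φ {x | τ < u x} {x | τ < v x} := by
  have hlevel {w : E → ℝ} (hw : Measurable w) (t : ℝ) : MeasurableSet {x | t < w x} :=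
    measurableSet_lt measurable_const hw
  have hle : ∀ᵐ τ ∂volume.restrict (Ioi (0 : ℝ)),
      mismatch φ {x | τ < u' x} {x | τ < v' x} ≤ mismatch φ {x | τ < u x} {x | τ < v x} :=
    ae_restrict_of_forall_mem measurableSet_Ioi fun τ hτ ↦ (hu' τ hτ).mismatch_le (hv' τ hτ) hφ
      hfin (hlevel hum τ) (hlevel hvm τ) (hlevel hum' τ) (hlevel hvm' τ)
  exact (ae_restrict_iff' measurableSet_Ioi).1 <| ae_eq_of_ae_le_of_lintegral_le hle (heq ▸ hmis)
    (measurable_mismatch_setOf_lt hφ hum hvm).aemeasurable heq.ge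

theorem lintegral_mismatch_eq_iff (hu' : IsSymmetricRearrangement u' u)
    (hv' : IsSymmetricRearrangement v' v) (hφ : StrictAnti φ) (hfin : ∫⁻ x : E, φ ‖x‖₊ ≠ ⊤)
    (hum : Measurable u) (hvm : Measurable v) (hum' : Measurable u') (hvm' : Measurable v')
    (hmis : ∫⁻ τ in Ioi 0, mismatch φ {x | τ < u x} {x | τ < v x} ≠ ⊤) :
    ∫⁻ τ in Ioi 0, mismatch φ {x | τ < u' x} {x | τ < v' x} =
        ∫⁻ τ in Ioi 0, mismatch φ {x | τ < u x} {x | τ < v x} ↔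
      ∀ τ > 0, volume {x | τ < u x} ≠ 0 → volume {x | τ < v x} ≠ 0 →
        ∃ z : E, {x | τ < u x} =ᵐ[volume] {x | τ < u' (x + z)} ∧
          {x | τ < v x} =ᵐ[volume] {x | τ < v' (x + z)} := by
  have hlevel {w : E → ℝ} (hw : Measurable w) (t : ℝ) : MeasurableSet {x | t < w x} :=
    measurableSet_lt measurable_const hw
  have hriesz_iff (t : ℝ) (ht : 0 < t) := (hu' t ht).rieszFunctional_eq_iff (hv' t ht) hφ hfin
    (hlevel hum t) (hlevel hvm t)
  have hmismatch_iff (t : ℝ) (ht : 0 < t) := (hu' t ht).mismatch_eq_iff (hv' t ht) hφ.antitone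
    hfin (hlevel hum t) (hlevel hvm t) (hlevel hum' t) (hlevel hvm' t)
  refine ⟨fun heq τ hτ ↦ (hriesz_iff τ hτ).1 ?_, fun h ↦ setLIntegral_congr_fun measurableSet_Ioi
    fun τ hτ ↦ (hmismatch_iff τ hτ).2 ((hriesz_iff τ hτ).2 (h τ hτ))⟩
  refine le_antisymm (rieszFunctional_setOf_lt_le_of_ae ?_) ?_
  · filter_upwards [hu'.ae_mismatch_eq hv' hφ.antitone hfin hum hvm hum' hvm' hmis heq]
      with t ht hτt
    rw [(hmismatch_iff t (hτ.trans hτt)).1 (ht (hτ.trans hτt))]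
    exact lintegral_mono_set (prod_mono (fun _ hx ↦ hτt.trans hx) fun _ hy ↦ hτt.trans hy)
  · exact (hu' τ hτ).rieszFunctional_le (hv' τ hτ) hφ.antitone hfin (hlevel hum τ) (hlevel hvm τ)

end IsSymmetricRearrangement

end Rearrangement

/-! ### The Schwarz rearrangement -/

section SchwarzRearrangement

lemma tendsto_measure_setOf_lt_atTop {α : Type*} [MeasurableSpace α] {μ : Measure α} {w : α → ℝ}
    (hw : Measurable w) (hfin : ∃ t, μ {x | t < w x} ≠ ⊤) :
    Tendsto (fun t ↦ μ {x | t < w x}) atTop (𝓝 0) := by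
  have hempty : ⋂ t, {x | t < w x} = ∅ :=
    eq_empty_of_forall_notMem fun x hx ↦ lt_irrefl (w x) (mem_iInter.1 hx (w x))
  rw [← measure_empty (μ := μ), ← hempty]
  exact tendsto_measure_iInter_atTop
    (fun t ↦ (measurableSet_lt measurable_const hw).nullMeasurableSet)
    (fun s t hst x hx ↦ hst.trans_lt hx) hfin

lemma lt_volumeReal_iff_mem {T : Set ℝ} {τ : ℝ} (hpos : T ⊆ Ioi 0)
    (hdown : ∀ s > 0, ∀ t ∈ T, s ≤ t → s ∈ T) (hsucc : ∀ t ∈ T, ∃ s ∈ T, t < s)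
    (hbdd : BddAbove T) (hτ : 0 < τ) : τ < volume.real T ↔ τ ∈ T := by
  obtain ⟨b, hb⟩ := hbdd
  refine ⟨fun h ↦ ?_, fun h ↦ ?_⟩
  · by_contra hτT
    have hsub : T ⊆ Ioo 0 τ := fun t ht ↦
      ⟨hpos ht, lt_of_not_ge fun hle ↦ hτT (hdown τ hτ t ht hle)⟩
    have hle := measureReal_mono (μ := volume) hsub measure_Ioo_lt_top.ne
    rw [Real.volume_real_Ioo_of_le hτ.le, sub_zero] at hle
    exact h.not_ge hle
  · obtain ⟨s, hs, hτs⟩ := hsucc τ h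
    have hTfin : volume T ≠ ⊤ := measure_ne_top_of_subset
      (show T ⊆ Ioc 0 b from fun t ht ↦ ⟨hpos ht, hb ht⟩) measure_Ioc_lt_top.ne
    have hle := measureReal_mono (μ := volume)
      (show Ioc 0 s ⊆ T from fun t ht ↦ hdown t ht.1 s hs ht.2) hTfin
    rw [Real.volume_real_Ioc_of_le (hpos hs).le, sub_zero] at hle
    exact hτs.trans_le hle

variable {n : ℕ} {u : EuclideanSpace ℝ (Fin n) → ℝ}

lemma schwarzRadius_nonneg (n : ℕ) (A : Set (EuclideanSpace ℝ (Fin n))) :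
    0 ≤ schwarzRadius n A := by
  unfold schwarzRadius
  positivity

lemma schwarzRearr_nonneg (u : EuclideanSpace ℝ (Fin n) → ℝ) (x : EuclideanSpace ℝ (Fin n)) :
    0 ≤ schwarzRearr n u x :=
  integral_nonneg fun _ ↦ indicator_nonneg (fun _ _ ↦ zero_le_one) _

lemma measurable_schwarzRadius_setOf_lt (u : EuclideanSpace ℝ (Fin n) → ℝ) :
    Measurable fun t : ℝ ↦ schwarzRadius n {y | t < u y} := by
  have hanti : Antitone fun t : ℝ ↦ volume {y | t < u y} := fun s t hst ↦
    measure_mono fun y hy ↦ hst.trans_lt hy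
  exact (hanti.measurable.ennreal_toReal.div_const _).pow_const _

lemma schwarzRearr_eq_volumeReal (u : EuclideanSpace ℝ (Fin n) → ℝ)
    (x : EuclideanSpace ℝ (Fin n)) : schwarzRearr n u x =
      volume.real {t | 0 < t ∧ ‖x‖ < schwarzRadius n {y | t < |u y|}} := by
  have hmeas : MeasurableSet {t : ℝ | ‖x‖ < schwarzRadius n {y | t < |u y|}} :=
    measurableSet_lt measurable_const (measurable_schwarzRadius_setOf_lt fun y ↦ |u y|)
  calc schwarzRearr n u x
      = ∫ t in Ioi 0, {t | ‖x‖ < schwarzRadius n {y | t < |u y|}}.indicator 1 t := by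
        simp only [schwarzRearr, schwarzSet, indicator, mem_ball_zero_iff, mem_ofPred_eq,
          Pi.one_apply]
    _ = volume.real ({t | ‖x‖ < schwarzRadius n {y | t < |u y|}} ∩ Ioi 0) := by
        rw [integral_indicator_one hmeas, measureReal_restrict_apply hmeas]
    _ = _ := by rw [inter_comm]; rfl

lemma measurable_schwarzRearr (u : EuclideanSpace ℝ (Fin n) → ℝ) :
    Measurable (schwarzRearr n u) := by
  have hset : MeasurableSet {p : EuclideanSpace ℝ (Fin n) × ℝ |
      0 < p.2 ∧ ‖p.1‖ < schwarzRadius n {y | p.2 < |u y|}} :=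
    (measurableSet_lt measurable_const measurable_snd).inter <|
      measurableSet_lt measurable_fst.norm
        ((measurable_schwarzRadius_setOf_lt fun y ↦ |u y|).comp measurable_snd)
  rw [funext (schwarzRearr_eq_volumeReal u)]
  exact (measurable_measure_prodMk_left hset).ennreal_toReal

variable [NeZero n] {A : Set (EuclideanSpace ℝ (Fin n))} {τ ρ : ℝ}

lemma volume_schwarzSet (hA : volume A ≠ ⊤) : volume (schwarzSet n A) = volume A := by
  have hball : volume (ball (0 : EuclideanSpace ℝ (Fin n)) 1) ≠ 0 :=
    (measure_ball_pos _ _ one_pos).ne'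
  rw [schwarzSet, Measure.addHaar_ball _ _ (schwarzRadius_nonneg n A), finrank_euclideanSpace_fin,
    schwarzRadius, Real.rpow_inv_natCast_pow (by positivity) (NeZero.ne n),
    ENNReal.ofReal_div_of_pos (ENNReal.toReal_pos hball measure_ball_lt_top.ne),
    ENNReal.ofReal_toReal hA, ENNReal.ofReal_toReal measure_ball_lt_top.ne,
    ENNReal.div_mul_cancel hball measure_ball_lt_top.ne]

lemma lt_schwarzRadius_iff (hA : volume A ≠ ⊤) (hρ : 0 ≤ ρ) :
    ρ < schwarzRadius n A ↔ volume (ball (0 : EuclideanSpace ℝ (Fin n)) ρ) < volume A := by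
  rw [← volume_schwarzSet hA, schwarzSet]
  refine ⟨fun h ↦ ?_, fun h ↦ lt_of_not_ge fun hle ↦ h.not_ge (measure_mono (ball_subset_ball hle))⟩
  rw [Measure.addHaar_ball _ _ hρ, Measure.addHaar_ball _ _ (hρ.trans h.le),
    finrank_euclideanSpace_fin]
  refine (ENNReal.mul_lt_mul_iff_left (measure_ball_pos _ _ one_pos).ne'
    measure_ball_lt_top.ne).2 ?_
  exact (ENNReal.ofReal_lt_ofReal_iff (pow_pos (hρ.trans_lt h) n)).2
    (pow_lt_pow_left₀ h hρ (NeZero.ne n))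

lemma lt_schwarzRearr_iff (hu : Measurable u) (hfin : ∀ t > 0, volume {y | t < |u y|} ≠ ⊤)
    (hτ : 0 < τ) {x : EuclideanSpace ℝ (Fin n)} (hx : x ≠ 0) :
    τ < schwarzRearr n u x ↔ x ∈ schwarzSet n {y | τ < |u y|} := by
  have hlevels : {t | 0 < t ∧ ‖x‖ < schwarzRadius n {y | t < |u y|}} =
      {t | 0 < t ∧ volume (ball (0 : EuclideanSpace ℝ (Fin n)) ‖x‖) < volume {y | t < |u y|}} :=
    Set.ext fun t ↦ and_congr_right fun ht ↦ lt_schwarzRadius_iff (hfin t ht) (norm_nonneg x)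
  rw [schwarzSet, mem_ball_zero_iff, lt_schwarzRadius_iff (hfin τ hτ) (norm_nonneg x),
    schwarzRearr_eq_volumeReal, hlevels, lt_volumeReal_iff_mem (fun t ht ↦ ht.1) ?_ ?_ ?_ hτ]
  · exact and_iff_right hτ
  · exact fun s hs t ht hst ↦ ⟨hs, ht.2.trans_le (measure_mono fun y hy ↦ hst.trans_lt hy)⟩
  · rintro t ⟨ht0, ht⟩
    by_contra! hle
    refine ht.not_ge (measure_setOf_lt_le_of_ae (.of_forall fun s hts ↦ ?_))
    exact not_lt.1 fun hs ↦ (hle s ⟨ht0.trans hts, hs⟩).not_gt hts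
  · have hball :=
      measure_ball_pos (volume : Measure (EuclideanSpace ℝ (Fin n))) 0 (norm_pos_iff.2 hx)
    have hdecay := tendsto_measure_setOf_lt_atTop hu.abs ⟨1, hfin 1 one_pos⟩
    obtain ⟨b, hb⟩ := (hdecay.eventually_lt_const hball).exists
    exact ⟨b, fun t ht ↦ le_of_not_gt fun hbt ↦ ht.2.not_ge
      ((measure_mono fun y hy ↦ hbt.trans hy).trans hb.le)⟩

theorem isSymmetricRearrangement_schwarzRearr (hu : Measurable u)
    (hfin : ∀ t > 0, volume {y | t < |u y|} ≠ ⊤) :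
    IsSymmetricRearrangement (schwarzRearr n u) fun x ↦ |u x| := by
  refine fun τ hτ ↦ ⟨schwarzRadius n {y | τ < |u y|}, ?_, (volume_schwarzSet (hfin τ hτ)).symm⟩
  filter_upwards [Measure.ae_ne volume 0] with x hx
  exact propext (lt_schwarzRearr_iff hu hfin hτ hx)

end SchwarzRearrangement

/-! ### Radial kernels -/

section RadialKernel

/-- The radial kernel `x ↦ g₀ ‖x‖` as a function of `‖x‖`, with values in `[0, ∞]`. The value `⊤`
at the origin, a null set, makes it strictly decreasing on all of `[0, ∞)` when `g₀` is so on
`(0, ∞)`. -/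
noncomputable def radialKernel (g₀ : ℝ → ℝ) (r : ℝ≥0) : ℝ≥0∞ :=
  if r = 0 then ⊤ else ENNReal.ofReal (g₀ r)

variable {g₀ : ℝ → ℝ}

lemma strictAnti_radialKernel (hg₀ : StrictAntiOn g₀ (Ioi 0)) (hnonneg : ∀ r > 0, 0 ≤ g₀ r) :
    StrictAnti (radialKernel g₀) := fun r s hrs ↦ by
  have hs : 0 < s := pos_of_gt hrs
  rcases eq_or_ne r 0 with rfl | hr
  · simp [radialKernel, hs.ne']
  · have hlt : g₀ s < g₀ r :=
      hg₀ (NNReal.coe_pos.2 (pos_iff_ne_zero.2 hr)) (NNReal.coe_pos.2 hs) hrs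
    simp only [radialKernel, hr, hs.ne', if_false]
    exact (ENNReal.ofReal_lt_ofReal_iff ((hnonneg s hs).trans_lt hlt)).2 hlt

variable [MeasurableSpace E] [BorelSpace E] [FiniteDimensional ℝ E] [Nontrivial E]

lemma ae_radialKernel_nndist (g₀ : ℝ → ℝ) (x : E) :
    ∀ᵐ y, radialKernel g₀ (nndist x y) = ENNReal.ofReal (g₀ ‖x - y‖) := by
  filter_upwards [Measure.ae_ne volume x] with y hy
  rw [radialKernel, if_neg (nndist_eq_zero.not.2 hy.symm), coe_nndist, dist_eq_norm]

lemma lintegral_radialKernel (g₀ : ℝ → ℝ) :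
    ∫⁻ x : E, radialKernel g₀ ‖x‖₊ = ∫⁻ x : E, ENNReal.ofReal (g₀ ‖x‖) :=
  lintegral_congr_ae <| by
    simpa only [EventuallyEq, nndist_zero_left, zero_sub, norm_neg] using
      ae_radialKernel_nndist g₀ (0 : E)

theorem lintegral_ofReal_abs_sub_mul_radial (hg₀ : Antitone (radialKernel g₀)) {a b : E → ℝ}
    (ha : Measurable a) (hb : Measurable b) (ha0 : ∀ x, 0 ≤ a x) (hb0 : ∀ x, 0 ≤ b x) :
    ∫⁻ x, ∫⁻ y, ENNReal.ofReal (|a x - b y| * g₀ ‖x - y‖) =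
      ∫⁻ τ in Ioi 0, mismatch (radialKernel g₀) {x | τ < a x} {x | τ < b x} := by
  rw [← lintegral_lintegral_ofReal_abs_sub_mul hg₀ ha hb ha0 hb0]
  refine lintegral_congr fun x ↦ lintegral_congr_ae ?_
  filter_upwards [ae_radialKernel_nndist g₀ x] with y hy
  rw [hy, ENNReal.ofReal_mul (abs_nonneg _)]

end RadialKernel

lemma ofReal_lt_essSup_iff {α : Type*} [MeasurableSpace α] {μ : Measure α} {u : α → ℝ} {τ : ℝ}
    (hτ : 0 ≤ τ) : ENNReal.ofReal τ < essSup (fun x ↦ ENNReal.ofReal (u x)) μ ↔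
      μ {x | τ < u x} ≠ 0 := by
  have hle : essSup (fun x ↦ ENNReal.ofReal (u x)) μ ≤ ENNReal.ofReal τ ↔ ∀ᵐ x ∂μ, u x ≤ τ := by
    simp only [← ENNReal.ofReal_le_ofReal_iff hτ]
    exact ⟨fun h ↦ (ENNReal.ae_le_essSup _).mono fun x hx ↦ hx.trans h, essSup_le_of_ae_le _⟩
  rw [← not_le, hle, ae_iff]
  simp only [not_le, ne_eq]

end SchwarzRearrangement

theorem stmt_2 (n : ℕ) (hn : 1 ≤ n)
    (g : EuclideanSpace ℝ (Fin n) → ℝ) (hgint : Integrable g) (hgnonneg : ∀ x, 0 ≤ g x)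
    (g₀ : ℝ → ℝ) (hg₀ : StrictAntiOn g₀ (Set.Ioi 0)) (hgrad : ∀ x, g x = g₀ ‖x‖)
    (u v : EuclideanSpace ℝ (Fin n) → ℝ) (hu : Measurable u) (hv : Measurable v)
    (hu0 : ∀ x, 0 ≤ u x) (hv0 : ∀ x, 0 ≤ v x)
    (huτ : ∀ τ : ℝ, 0 < τ → volume {x | τ < u x} < ⊤)
    (hvτ : ∀ τ : ℝ, 0 < τ → volume {x | τ < v x} < ⊤)
    (hfin : (∫⁻ x : EuclideanSpace ℝ (Fin n), ∫⁻ y : EuclideanSpace ℝ (Fin n),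
        ENNReal.ofReal (|u x - v y| * g (x - y))) ≠ ⊤) :
    ((∫⁻ x : EuclideanSpace ℝ (Fin n), ∫⁻ y : EuclideanSpace ℝ (Fin n),
        ENNReal.ofReal (|schwarzRearr n u x - schwarzRearr n v y| * g (x - y))) =
      ∫⁻ x : EuclideanSpace ℝ (Fin n), ∫⁻ y : EuclideanSpace ℝ (Fin n),
        ENNReal.ofReal (|u x - v y| * g (x - y))) ↔
      ∀ τ : ℝ, 0 < τ →
        ENNReal.ofReal τ <
          min (essSup (fun x => ENNReal.ofReal (u x)) volume)
            (essSup (fun x => ENNReal.ofReal (v x)) volume) →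
        ∃ z : EuclideanSpace ℝ (Fin n),
          ({x | τ < u x} : Set (EuclideanSpace ℝ (Fin n))) =ᵐ[volume]
            {x | τ < schwarzRearr n u (x + z)} ∧
          ({y | τ < v y} : Set (EuclideanSpace ℝ (Fin n))) =ᵐ[volume]
            {y | τ < schwarzRearr n v (y + z)} := by
  open SchwarzRearrangement in
  have : NeZero n := ⟨Nat.one_le_iff_ne_zero.1 hn⟩
  have hkernel : StrictAnti (radialKernel g₀) := strictAnti_radialKernel hg₀ fun r hr ↦ by
    obtain ⟨x, rfl⟩ := exists_norm_eq (EuclideanSpace ℝ (Fin n)) hr.le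
    exact hgrad x ▸ hgnonneg x
  have hkernel_fin : ∫⁻ x : EuclideanSpace ℝ (Fin n), radialKernel g₀ ‖x‖₊ ≠ ⊤ := by
    simpa only [lintegral_radialKernel, ← hgrad] using hgint.lintegral_lt_top.ne
  have hrearr {w : EuclideanSpace ℝ (Fin n) → ℝ} (hw : Measurable w) (hw0 : ∀ x, 0 ≤ w x)
      (hwτ : ∀ τ : ℝ, 0 < τ → volume {x | τ < w x} < ⊤) :
      IsSymmetricRearrangement (schwarzRearr n w) w := by
    simpa only [abs_of_nonneg (hw0 _)] using isSymmetricRearrangement_schwarzRearr hw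
      (by simpa only [abs_of_nonneg (hw0 _)] using fun τ hτ ↦ (hwτ τ hτ).ne)
  have hmu := measurable_schwarzRearr u
  have hmv := measurable_schwarzRearr v
  simp only [hgrad, lintegral_ofReal_abs_sub_mul_radial hkernel.antitone hu hv hu0 hv0,
    lintegral_ofReal_abs_sub_mul_radial hkernel.antitone hmu hmv (schwarzRearr_nonneg u)
      (schwarzRearr_nonneg v)] at hfin ⊢
  rw [(hrearr hu hu0 huτ).lintegral_mismatch_eq_iff (hrearr hv hv0 hvτ) hkernel hkernel_fin hu hv
    hmu hmv hfin]
  refine forall₂_congr fun τ hτ ↦ ?_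
  rw [lt_min_iff, ofReal_lt_essSup_iff hτ.le, ofReal_lt_essSup_iff hτ.le, and_imp]
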